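/- arXiv:2511.10347 — 3 statements merged into one kernel-verified Lean document; each statement's English description precedes it below -/
import Mathlib

section
/- Mixed critical regime for the Type-II ERW: if m > m' (so that p_c^m < p_c^{m'}) and p = p_c^m = (m+1)/(2m), then (S_{2n} − n(ū + w̄))/√(n·log n) converges in distribution, as n → ∞, to the centered multivariate Gaussian distribution on ℝ^d with covariance matrix Σ(U); the contribution of the w-steps is negligible at this scaling. -/
/-!
Fix `l ∈ ℝ^d` and put `a i = ⟨l, u_i - ū⟩`, `b j = ⟨l, w_j - w̄⟩`. The projection of the centred walk
on `l` is `T_n(a) + T'_n(b)` with `T_n(a) = ∑ a (ξ_k)` and `T'_n(b) = ∑ b (η_k)`. As `a` sums to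
zero, the transition rule says `E[a (ξ_{n+1}) | past] = (λ / n) T_n(a)` with
`λ = p - (1 - p) / (m - 1)` (`IsReinforced.condExp_comp`). At `p = (m + 1) / (2 m)` this `λ` equals
`1 / 2`, whereas the corresponding `λ'` for the `w`-steps lies in `[0, 1 / 2)` because `m' < m`.

*The `w`-steps.* The recursion `E T'_{n+1}² ≤ (1 + 2 λ' / n) E T'_n² + const` gives
`E T'_n² = O(n)`, so `T'_n / √(n log n) → 0` in `L¹` (`IsReinforced.exists_first_moment_bound`).

*The `u`-steps.* Since `λ = 1 / 2`, the process `T_n / √n` is a martingale up to a summable error.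
Its increment is `x_{n+1} / √(n + 1)` with `x_{n+1} = a (ξ_{n+1}) - T_n / (2 n)`, up to that
error, and `E[x_{n+1}² | past]` is close to `v = (1 / m) ∑ a_i²`: the drift identity applied to
`i ↦ a_i² - v` and the second moment bound `E T_n² = O(n^{3/2})` give an error `O(n^{-1/4})`
(`IsReinforced.integral_incr_sq`). A second-order Taylor expansion then shows that one step
multiplies the characteristic function of `T_n / √n` at `θ` by `exp (-θ² v / (2 (n + 1)))`, up to
`O((|θ| + θ² + |θ|³ + θ⁴) n^{-5/4})` (`IsReinforced.walkChar_step`). These errors are summable in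
`n`, so the characteristic function stays within `K (|θ| + θ² + |θ|³ + θ⁴)` of
`exp (-θ² v H_n / 2)`, with `H_n` the harmonic number (`IsReinforced.exists_walkChar_bound`).
Taking `θ = 1 / √(log n)`, the error vanishes and `H_n / log n → 1`, so the limit is `exp (-v / 2)`.

As `v = ⟨l, Σ(U) l⟩`, Lévy's continuity theorem concludes.
-/

open MeasureTheory ProbabilityTheory Filter Finset Topology Matrix

noncomputable section

/-- The σ-algebra generated by the steps `ξ 1, …, ξ n` of the walk. -/
def stepFiltration {Ω : Type*} [MeasurableSpace Ω] {m : ℕ} (ξ : ℕ → Ω → Fin m) (n : ℕ) :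
    MeasurableSpace Ω :=
  ⨆ k ∈ Finset.Icc 1 n, MeasurableSpace.comap (ξ k) ⊤

/-- A Type-II elephant random walk with memory parameter `p`: two independent
reinforced sequences of step indices, `ξ` (values in `Fin m`, first step `i0`) and
`η` (values in `Fin m'`, first step `j0`). -/
structure IsTypeIIERW {Ω : Type*} [MeasurableSpace Ω] (μ : Measure Ω)
    (m m' : ℕ) (p : ℝ) (i0 : Fin m) (j0 : Fin m')
    (ξ : ℕ → Ω → Fin m) (η : ℕ → Ω → Fin m') : Prop where
  measurable_fst : ∀ n, Measurable (ξ n)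
  measurable_snd : ∀ n, Measurable (η n)
  first_fst : ∀ᵐ ω ∂μ, ξ 1 ω = i0
  first_snd : ∀ᵐ ω ∂μ, η 1 ω = j0
  cond_fst : ∀ n : ℕ, 1 ≤ n → ∀ j : Fin m,
    (μ[(fun ω => if ξ (n + 1) ω = j then (1 : ℝ) else 0) | stepFiltration ξ n]) =ᵐ[μ]
      (fun ω => (1 / (n : ℝ)) * ∑ k ∈ Finset.Icc 1 n,
        (p * (if ξ k ω = j then (1 : ℝ) else 0)
          + ((1 - p) / ((m : ℝ) - 1)) * (if ξ k ω = j then (0 : ℝ) else 1)))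
  cond_snd : ∀ n : ℕ, 1 ≤ n → ∀ j : Fin m',
    (μ[(fun ω => if η (n + 1) ω = j then (1 : ℝ) else 0) | stepFiltration η n]) =ᵐ[μ]
      (fun ω => (1 / (n : ℝ)) * ∑ k ∈ Finset.Icc 1 n,
        (p * (if η k ω = j then (1 : ℝ) else 0)
          + ((1 - p) / ((m' : ℝ) - 1)) * (if η k ω = j then (0 : ℝ) else 1)))
  indep : IndepFun (fun ω => fun k => ξ k ω) (fun ω => fun k => η k ω) μ

/-- `ν` is the centered (multivariate) Gaussian distribution on `ℝ^d` with covariance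
matrix `S`: equivalently, every linear functional `x ↦ ⟨l, x⟩` pushes `ν` forward to a
real centered Gaussian with variance `⟨l, S l⟩`. -/
def IsCenteredGaussianCov {d : ℕ} (ν : Measure (Fin d → ℝ))
    (S : Matrix (Fin d) (Fin d) ℝ) : Prop :=
  IsProbabilityMeasure ν ∧ ∀ l : Fin d → ℝ,
    ν.map (fun x => l ⬝ᵥ x) =
      ProbabilityTheory.gaussianReal 0 (Real.toNNReal (l ⬝ᵥ S.mulVec l))

/-! ### Reinforced sequences: drift identity and second moments -/

/-- A reinforced sequence of indices in `Fin m` with memory parameter `p`: one component of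
the Type-II walk, without the condition on its first term. -/
structure IsReinforced {Ω : Type*} [MeasurableSpace Ω] (μ : Measure Ω)
    {m : ℕ} (p : ℝ) (ξ : ℕ → Ω → Fin m) : Prop where
  measurable : ∀ n, Measurable (ξ n)
  cond : ∀ n : ℕ, 1 ≤ n → ∀ j : Fin m,
    (μ[(fun ω => if ξ (n + 1) ω = j then (1 : ℝ) else 0) | stepFiltration ξ n]) =ᵐ[μ]
      (fun ω => (1 / (n : ℝ)) * ∑ k ∈ Finset.Icc 1 n,
        (p * (if ξ k ω = j then (1 : ℝ) else 0)
          + ((1 - p) / ((m : ℝ) - 1)) * (if ξ k ω = j then (0 : ℝ) else 1)))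

/-- The scalar walk `T_n(a) = a (ξ 1) + ⋯ + a (ξ n)`. -/
def scalarWalk {Ω : Type*} {m : ℕ} (ξ : ℕ → Ω → Fin m) (a : Fin m → ℝ) (n : ℕ) (ω : Ω) : ℝ :=
  ∑ k ∈ Finset.Icc 1 n, a (ξ k ω)

section Reinforced

variable {Ω : Type*} {m : ℕ} {p : ℝ} {ξ : ℕ → Ω → Fin m}

lemma scalarWalk_succ (a : Fin m → ℝ) (n : ℕ) (ω : Ω) :
    scalarWalk ξ a (n + 1) ω = scalarWalk ξ a n ω + a (ξ (n + 1) ω) := by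
  simp [scalarWalk, Finset.sum_Icc_succ_top]

lemma scalarWalk_one (a : Fin m → ℝ) (ω : Ω) : scalarWalk ξ a 1 ω = a (ξ 1 ω) := by
  simp [scalarWalk]

lemma abs_scalarWalk_le {a : Fin m → ℝ} {A : ℝ} (hA : ∀ i, |a i| ≤ A) (n : ℕ) (ω : Ω) :
    |scalarWalk ξ a n ω| ≤ A * n := by
  refine (Finset.abs_sum_le_sum_abs _ _).trans ?_
  refine (Finset.sum_le_sum fun k _ => hA (ξ k ω)).trans ?_
  simp [mul_comm]

variable [MeasurableSpace Ω] {μ : Measure Ω}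

lemma measurable_scalarWalk_step (a : Fin m → ℝ) (n : ℕ) :
    Measurable[stepFiltration ξ n] (scalarWalk ξ a n) := by
  unfold scalarWalk
  refine Finset.measurable_fun_sum _ fun k hk => ?_
  have h1 : Measurable[stepFiltration ξ n] (ξ k) := by
    rw [measurable_iff_comap_le]
    exact le_iSup₂_of_le (f := fun k _ => MeasurableSpace.comap (ξ k) ⊤) k hk le_rfl
  exact (measurable_of_finite a).comp h1

namespace IsReinforced

lemma stepFiltration_le (h : IsReinforced μ p ξ) (n : ℕ) :
    stepFiltration ξ n ≤ ‹MeasurableSpace Ω› := by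
  refine iSup₂_le fun k _ => ?_
  exact (h.measurable k).comap_le

lemma measurable_scalarWalk (h : IsReinforced μ p ξ) (a : Fin m → ℝ) (n : ℕ) :
    Measurable (scalarWalk ξ a n) :=
  (measurable_scalarWalk_step a n).mono (h.stepFiltration_le n) le_rfl

lemma measurable_comp (h : IsReinforced μ p ξ) (a : Fin m → ℝ) (n : ℕ) :
    Measurable (fun ω => a (ξ n ω)) :=
  (measurable_of_finite a).comp (h.measurable n)

/-- On centred functions of the index, the transition matrix of the memory is the scalar
`p - (1 - p) / (m - 1)`. -/
lemma condExp_comp [IsProbabilityMeasure μ] (h : IsReinforced μ p ξ) {a : Fin m → ℝ}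
    (ha : ∑ i, a i = 0) {n : ℕ} (hn : 1 ≤ n) :
    μ[(fun ω => a (ξ (n + 1) ω)) | stepFiltration ξ n] =ᵐ[μ]
      fun ω => (p - (1 - p) / ((m : ℝ) - 1)) / n * scalarWalk ξ a n ω := by
  have e1 : (fun ω => a (ξ (n + 1) ω)) =
      ∑ j : Fin m, (a j) • (fun ω => if ξ (n + 1) ω = j then (1 : ℝ) else 0) := by
    ext ω; simp [Finset.sum_apply]
  have hInt : ∀ j : Fin m, Integrable (fun ω => if ξ (n + 1) ω = j then (1 : ℝ) else 0) μ := by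
    intro j
    refine Integrable.of_bound (C := 1)
      (h.measurable_comp (fun i => if i = j then (1 : ℝ) else 0) (n + 1)).aestronglyMeasurable
      (ae_of_all _ fun ω => ?_)
    split_ifs <;> simp
  rw [e1]
  refine (condExp_finsetSum (fun j _ => (hInt j).smul (a j)) _).trans ?_
  have h2 : ∀ j : Fin m, _ := fun j =>
    (condExp_smul (μ := μ) (a j) (fun ω => if ξ (n + 1) ω = j then (1 : ℝ) else 0)
      (stepFiltration ξ n))
  have h3 := eventually_all.2 h2
  have h4 := eventually_all.2 (fun j => h.cond n hn j)
  filter_upwards [h3, h4] with ω h3 h4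
  simp only [Finset.sum_apply]
  have key : ∀ i : Fin m, ∑ j, a j * (p * (if i = j then (1 : ℝ) else 0)
      + ((1 - p) / ((m : ℝ) - 1)) * (if i = j then (0 : ℝ) else 1))
      = (p - (1 - p) / ((m : ℝ) - 1)) * a i := by
    intro i
    have : ∀ j, a j * (p * (if i = j then (1 : ℝ) else 0)
      + ((1 - p) / ((m : ℝ) - 1)) * (if i = j then (0 : ℝ) else 1)) =
      (p - (1 - p) / ((m : ℝ) - 1)) * (if i = j then a j else 0)
        + ((1 - p) / ((m : ℝ) - 1)) * a j := by
      intro j; split_ifs <;> ring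
    simp only [this]
    rw [Finset.sum_add_distrib, ← Finset.mul_sum, ← Finset.mul_sum, ha]
    simp
  calc _ = ∑ j, a j * ((1 / (n : ℝ)) * ∑ k ∈ Finset.Icc 1 n,
        (p * (if ξ k ω = j then (1 : ℝ) else 0)
          + ((1 - p) / ((m : ℝ) - 1)) * (if ξ k ω = j then (0 : ℝ) else 1))) := by
        refine Finset.sum_congr rfl fun j _ => ?_
        rw [h3 j, Pi.smul_apply, h4 j, smul_eq_mul]
    _ = (1 / (n : ℝ)) * ∑ k ∈ Finset.Icc 1 n, ∑ j, a j *
        (p * (if ξ k ω = j then (1 : ℝ) else 0)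
          + ((1 - p) / ((m : ℝ) - 1)) * (if ξ k ω = j then (0 : ℝ) else 1)) := by
        rw [Finset.sum_comm, Finset.mul_sum]
        refine Finset.sum_congr rfl fun j _ => ?_
        rw [Finset.mul_sum, Finset.mul_sum, Finset.mul_sum]
        refine Finset.sum_congr rfl fun k _ => ?_
        ring
    _ = _ := by
        simp only [key, scalarWalk]
        rw [← Finset.mul_sum]; ring

/-- The one-step drift identity, tested against a bounded function of the past. All later
estimates use the transition rule only through this identity. -/
lemma integral_drift [IsProbabilityMeasure μ] {E : Type*} [NormedAddCommGroup E]
    [NormedSpace ℝ E] [CompleteSpace E] (h : IsReinforced μ p ξ) {lam : ℝ}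
    (hlam : p - (1 - p) / ((m : ℝ) - 1) = lam)
    {a : Fin m → ℝ} (ha : ∑ i, a i = 0) {n : ℕ} (hn : 1 ≤ n) {g : Ω → E}
    (hg : StronglyMeasurable[stepFiltration ξ n] g) {C : ℝ} (hC : ∀ ω, ‖g ω‖ ≤ C) :
    ∫ ω, a (ξ (n + 1) ω) • g ω ∂μ = ∫ ω, (lam / n * scalarWalk ξ a n ω) • g ω ∂μ := by
  have hInt : Integrable (fun ω => a (ξ (n + 1) ω)) μ := by
    obtain ⟨A, hA⟩ := (Set.finite_range a).isBounded.exists_norm_le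
    exact Integrable.of_bound (C := A) (h.measurable_comp a (n + 1)).aestronglyMeasurable
      (ae_of_all _ fun ω => hA _ ⟨_, rfl⟩)
  have h1 := condExp_stronglyMeasurable_bilin_of_bound (μ := μ)
    ((ContinuousLinearMap.lsmul ℝ ℝ : ℝ →L[ℝ] E →L[ℝ] E).flip) (h.stepFiltration_le n) hg hInt C
    (ae_of_all _ hC)
  simp only [ContinuousLinearMap.flip_apply, ContinuousLinearMap.lsmul_apply] at h1
  rw [← integral_condExp (h.stepFiltration_le n)]
  refine integral_congr_ae ?_
  filter_upwards [h1, h.condExp_comp ha hn] with ω h1 h2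
  rw [h1, h2, hlam]

lemma integrable_of_bdd [IsProbabilityMeasure μ] {E : Type*} [NormedAddCommGroup E]
    [SecondCountableTopology E] [MeasurableSpace E] [BorelSpace E]
    {f : Ω → E} (hf : Measurable f) (C : ℝ) (hC : ∀ ω, ‖f ω‖ ≤ C) : Integrable f μ :=
  Integrable.of_bound hf.aestronglyMeasurable C (ae_of_all _ hC)

lemma integrable_sq [IsProbabilityMeasure μ] (h : IsReinforced μ p ξ) (a : Fin m → ℝ) (n : ℕ) :
    Integrable (fun ω => scalarWalk ξ a n ω ^ 2) μ := by
  obtain ⟨A, hA⟩ := (Set.finite_range a).isBounded.exists_norm_le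
  have hA' : ∀ i, |a i| ≤ A := fun i => hA _ ⟨i, rfl⟩
  refine integrable_of_bdd ((h.measurable_scalarWalk a n).pow_const 2) ((A * n) ^ 2) fun ω => ?_
  rw [norm_pow]
  exact pow_le_pow_left₀ (norm_nonneg _) (abs_scalarWalk_le hA' n ω) 2

lemma second_moment_step [IsProbabilityMeasure μ] (h : IsReinforced μ p ξ) {lam : ℝ}
    (hlam : p - (1 - p) / ((m : ℝ) - 1) = lam)
    {a : Fin m → ℝ} (ha : ∑ i, a i = 0) {A : ℝ} (hA : ∀ i, |a i| ≤ A) {n : ℕ} (hn : 1 ≤ n) :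
    ∫ ω, scalarWalk ξ a (n + 1) ω ^ 2 ∂μ
      ≤ (1 + 2 * lam / n) * ∫ ω, scalarWalk ξ a n ω ^ 2 ∂μ + A ^ 2 := by
  have hd := h.integral_drift hlam ha hn (g := scalarWalk ξ a n)
    (measurable_scalarWalk_step a n).stronglyMeasurable (abs_scalarWalk_le hA n)
  simp only [smul_eq_mul] at hd
  have hT := h.measurable_scalarWalk a n
  have hx := h.measurable_comp a (n + 1)
  have i1 : Integrable (fun ω => a (ξ (n + 1) ω) * scalarWalk ξ a n ω) μ := by
    refine integrable_of_bdd (hx.mul hT) (A * (A * n)) fun ω => ?_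
    rw [norm_mul]
    exact mul_le_mul (hA _) (abs_scalarWalk_le hA n ω) (norm_nonneg _)
      ((abs_nonneg _).trans (hA (ξ 1 ω)))
  have hxb : ∀ ω, a (ξ (n + 1) ω) ^ 2 ≤ A ^ 2 := fun ω => by
    rw [← sq_abs]; exact pow_le_pow_left₀ (abs_nonneg _) (hA _) 2
  have i2 : Integrable (fun ω => a (ξ (n + 1) ω) ^ 2) μ := by
    refine integrable_of_bdd (hx.pow_const 2) (A ^ 2) fun ω => ?_
    rw [Real.norm_of_nonneg (sq_nonneg _)]; exact hxb ω
  have e : ∀ ω, scalarWalk ξ a (n + 1) ω ^ 2 = scalarWalk ξ a n ω ^ 2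
      + 2 * (a (ξ (n + 1) ω) * scalarWalk ξ a n ω) + a (ξ (n + 1) ω) ^ 2 := fun ω => by
    rw [scalarWalk_succ]; ring
  have i3 : Integrable (fun ω => scalarWalk ξ a n ω ^ 2
      + 2 * (a (ξ (n + 1) ω) * scalarWalk ξ a n ω)) μ := (h.integrable_sq a n).add (i1.const_mul 2)
  simp only [e]
  rw [integral_add i3 i2, integral_add (h.integrable_sq a n) (i1.const_mul 2), integral_const_mul, hd]
  have e2 : ∀ ω, lam / n * scalarWalk ξ a n ω * scalarWalk ξ a n ω
      = lam / n * scalarWalk ξ a n ω ^ 2 := fun ω => by ring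
  simp only [e2]
  rw [integral_const_mul]
  have : ∫ ω, a (ξ (n + 1) ω) ^ 2 ∂μ ≤ A ^ 2 := by
    have := integral_mono i2 (integrable_const (A ^ 2)) hxb
    simpa using this
  calc _ = (1 + 2 * lam / n) * ∫ ω, scalarWalk ξ a n ω ^ 2 ∂μ
        + ∫ ω, a (ξ (n + 1) ω) ^ 2 ∂μ := by ring
    _ ≤ _ := by gcongr

lemma second_moment_one [IsProbabilityMeasure μ] (h : IsReinforced μ p ξ)
    {a : Fin m → ℝ} {A : ℝ} (hA : ∀ i, |a i| ≤ A) :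
    ∫ ω, scalarWalk ξ a 1 ω ^ 2 ∂μ ≤ A ^ 2 := by
  have := integral_mono (h.integrable_sq a 1) (integrable_const (A ^ 2)) (fun ω => by
    rw [scalarWalk_one, ← sq_abs]; exact pow_le_pow_left₀ (abs_nonneg _) (hA _) 2)
  simpa using this

/-- In the subcritical regime the second moment grows at most linearly. -/
lemma second_moment_subcritical [IsProbabilityMeasure μ] (h : IsReinforced μ p ξ) {lam : ℝ}
    (hlam : p - (1 - p) / ((m : ℝ) - 1) = lam) (h0 : 0 ≤ lam) (h1 : lam < 1 / 2)
    {a : Fin m → ℝ} (ha : ∑ i, a i = 0) {A : ℝ} (hA : ∀ i, |a i| ≤ A) {n : ℕ} (hn : 1 ≤ n) :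
    ∫ ω, scalarWalk ξ a n ω ^ 2 ∂μ ≤ A ^ 2 / (1 - 2 * lam) * n := by
  have hpos : 0 < 1 - 2 * lam := by linarith
  induction n, hn using Nat.le_induction with
  | base =>
    refine (h.second_moment_one hA).trans ?_
    rw [Nat.cast_one, mul_one, le_div_iff₀ hpos]
    nlinarith [sq_nonneg A]
  | succ n hn ih =>
    have hn' : (0 : ℝ) < n := by exact_mod_cast hn
    refine (h.second_moment_step hlam ha hA hn).trans ?_
    calc (1 + 2 * lam / n) * ∫ ω, scalarWalk ξ a n ω ^ 2 ∂μ + A ^ 2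
        ≤ (1 + 2 * lam / n) * (A ^ 2 / (1 - 2 * lam) * n) + A ^ 2 := by gcongr
      _ = _ := by push_cast; field_simp; ring

/-- At criticality the second moment is of order `n log n`; the cruder exponent `3 / 2` suffices. -/
lemma second_moment_critical [IsProbabilityMeasure μ] (h : IsReinforced μ p ξ)
    (hlam : p - (1 - p) / ((m : ℝ) - 1) = 1 / 2)
    {a : Fin m → ℝ} (ha : ∑ i, a i = 0) {A : ℝ} (hA : ∀ i, |a i| ≤ A) {n : ℕ} (hn : 1 ≤ n) :
    ∫ ω, scalarWalk ξ a n ω ^ 2 ∂μ ≤ 2 * A ^ 2 * (n * √n) := by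
  induction n, hn using Nat.le_induction with
  | base =>
    refine (h.second_moment_one hA).trans ?_
    simp; nlinarith [sq_nonneg A]
  | succ n hn ih =>
    have hn' : (0 : ℝ) < n := by exact_mod_cast hn
    refine (h.second_moment_step hlam ha hA hn).trans ?_
    have h3 : (n + 1) * √(n : ℝ) + 1 / 2 ≤ (n + 1) * √((n : ℝ) + 1) := by
      have s1 := Real.sq_sqrt hn'.le
      have s2 := Real.sq_sqrt (by linarith : (0 : ℝ) ≤ n + 1)
      have s3 : √(n : ℝ) ≤ √((n : ℝ) + 1) := Real.sqrt_le_sqrt (by linarith)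
      have s4 : 1 ≤ √((n : ℝ) + 1) := by
        rw [Real.one_le_sqrt]; linarith
      -- `√(n+1) - √n = 1 / (√(n+1) + √n) ≥ 1 / (2 √(n+1))`
      have s5 : 1 ≤ 2 * √((n : ℝ) + 1) * (√((n : ℝ) + 1) - √n) := by
        nlinarith [Real.sqrt_nonneg (n : ℝ)]
      have s6 : 1 ≤ 2 * ((n : ℝ) + 1) * (√((n : ℝ) + 1) - √n) := by
        refine s5.trans (mul_le_mul_of_nonneg_right ?_ (by linarith))
        nlinarith
      linarith
    calc (1 + 2 * (1 / 2) / n) * ∫ ω, scalarWalk ξ a n ω ^ 2 ∂μ + A ^ 2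
        ≤ (1 + 2 * (1 / 2) / n) * (2 * A ^ 2 * (n * √n)) + A ^ 2 := by gcongr
      _ = 2 * A ^ 2 * ((n + 1) * √(n : ℝ) + 1 / 2) := by field_simp
      _ ≤ _ := by push_cast; gcongr

/-! ### The compensated increment -/

/-- The compensated increment is orthogonal to the past. -/
lemma integral_incr [IsProbabilityMeasure μ] (h : IsReinforced μ p ξ)
    (hlam : p - (1 - p) / ((m : ℝ) - 1) = 1 / 2)
    {a : Fin m → ℝ} (ha : ∑ i, a i = 0) {n : ℕ} (hn : 1 ≤ n) {g : Ω → ℂ}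
    (hg : Measurable[stepFiltration ξ n] g) (hC : ∀ ω, ‖g ω‖ ≤ 1) :
    ∫ ω, (a (ξ (n + 1) ω) - scalarWalk ξ a n ω / (2 * n)) • g ω ∂μ = 0 := by
  obtain ⟨A, hA⟩ := (Set.finite_range a).isBounded.exists_norm_le
  have hA' : ∀ i, |a i| ≤ A := fun i => hA _ ⟨i, rfl⟩
  have hgm := hg.mono (h.stepFiltration_le n) le_rfl
  have hd := h.integral_drift hlam ha hn hg.stronglyMeasurable hC
  have hT := h.measurable_scalarWalk a n
  have hx := h.measurable_comp a (n + 1)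
  have i1 : Integrable (fun ω => a (ξ (n + 1) ω) • g ω) μ := by
    refine integrable_of_bdd (hx.smul hgm) (A * 1) fun ω => ?_
    rw [norm_smul]
    exact mul_le_mul (hA' _) (hC ω) (norm_nonneg _) ((abs_nonneg _).trans (hA' (ξ 1 ω)))
  have i2 : Integrable (fun ω => (1 / 2 / (n : ℝ) * scalarWalk ξ a n ω) • g ω) μ := by
    refine integrable_of_bdd ((hT.const_mul _).smul hgm) (1 / 2 / n * (A * n) * 1) fun ω => ?_
    rw [norm_smul, norm_mul, Real.norm_of_nonneg (by positivity)]
    have := abs_scalarWalk_le (ξ := ξ) hA' n ω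
    have h2 : 0 ≤ A * n := (abs_nonneg _).trans this
    gcongr
    · exact this
    · exact hC ω
  have e : ∀ ω, (a (ξ (n + 1) ω) - scalarWalk ξ a n ω / (2 * n)) • g ω
      = a (ξ (n + 1) ω) • g ω - (1 / 2 / (n : ℝ) * scalarWalk ξ a n ω) • g ω := fun ω => by
    rw [← sub_smul]; congr 2; field_simp
  simp only [e]
  rw [integral_sub i1 i2, hd, sub_self]

/-- The conditional variance of the compensated increment converges to the variance `v` of `a`
under the uniform law; here tested against a function of the past and with a rate.
The fourth root of `n` is called `r`. -/
lemma integral_incr_sq [IsProbabilityMeasure μ] (h : IsReinforced μ p ξ)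
    (hlam : p - (1 - p) / ((m : ℝ) - 1) = 1 / 2)
    {a : Fin m → ℝ} (ha : ∑ i, a i = 0) {A : ℝ} (hA1 : 1 ≤ A) (hA : ∀ i, |a i| ≤ A)
    {v : ℝ} (hv0 : 0 ≤ v) (hvA : v ≤ A ^ 2) (hv : ∑ i, (a i ^ 2 - v) = 0)
    {n : ℕ} (hn : 1 ≤ n) {r : ℝ} (hr1 : 1 ≤ r) (hr : r ^ 4 = n) {g : Ω → ℂ}
    (hg : Measurable[stepFiltration ξ n] g) (hC : ∀ ω, ‖g ω‖ ≤ 1) :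
    ‖∫ ω, ((a (ξ (n + 1) ω) - scalarWalk ξ a n ω / (2 * n)) ^ 2) • g ω ∂μ - v • ∫ ω, g ω ∂μ‖
      ≤ 2 * A ^ 4 / r := by
  have hn' : (0 : ℝ) < n := by exact_mod_cast hn
  set b : Fin m → ℝ := fun i => a i ^ 2 - v with hb
  have hasq : ∀ i, a i ^ 2 ≤ A ^ 2 := fun i => by
    rw [← sq_abs]; exact pow_le_pow_left₀ (abs_nonneg _) (hA _) 2
  have hB : ∀ i, |b i| ≤ A ^ 2 := fun i => by
    rw [abs_le]; constructor <;> simp only [hb] <;> nlinarith [sq_nonneg (a i), hasq i]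
  have hgm := hg.mono (h.stepFiltration_le n) le_rfl
  have hT := h.measurable_scalarWalk a n
  have hTb := h.measurable_scalarWalk b n
  have hx := h.measurable_comp a (n + 1)
  have hxb := h.measurable_comp b (n + 1)
  have bdT : ∀ ω, |scalarWalk ξ a n ω| ≤ A * n := abs_scalarWalk_le hA n
  have bdTb : ∀ ω, |scalarWalk ξ b n ω| ≤ A ^ 2 * n := abs_scalarWalk_le hB n
  have d1 := h.integral_drift hlam (a := b) hv hn hg.stronglyMeasurable hC
  have d2 := h.integral_drift hlam ha hn (g := fun ω => (scalarWalk ξ a n ω / n) • g ω)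
    (C := A) ((((measurable_scalarWalk_step a n).div_const _).smul hg).stronglyMeasurable)
    (fun ω => by
      rw [norm_smul, norm_div, Real.norm_of_nonneg hn'.le]
      calc _ ≤ A * n / n * 1 := by
              gcongr
              · exact bdT ω
              · exact hC ω
        _ = A := by field_simp)
  -- a real bounded measurable factor times `g` is integrable
  have ig : ∀ (f : Ω → ℝ), Measurable f → ∀ c : ℝ, (∀ ω, |f ω| ≤ c) →
      Integrable (fun ω => f ω • g ω) μ := by
    intro f hf c hc
    refine integrable_of_bdd (hf.smul hgm) (c * 1) fun ω => ?_
    rw [norm_smul]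
    exact mul_le_mul (hc _) (hC ω) (norm_nonneg _) ((abs_nonneg _).trans (hc ω))
  have i0 : Integrable g μ := integrable_of_bdd hgm 1 hC
  have i1 : Integrable (fun ω => b (ξ (n + 1) ω) • g ω) μ := ig _ hxb (A ^ 2) fun ω => hB _
  have bdTn : ∀ ω, |scalarWalk ξ a n ω / n| ≤ A := fun ω => by
    rw [abs_div, abs_of_pos hn', div_le_iff₀ hn']; exact bdT ω
  have i2 : Integrable (fun ω => a (ξ (n + 1) ω) • ((scalarWalk ξ a n ω / n) • g ω)) μ := by
    have := ig (fun ω => a (ξ (n + 1) ω) * (scalarWalk ξ a n ω / n))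
      (hx.mul (hT.div_const _)) (A * A) fun ω => by
        rw [abs_mul]; exact mul_le_mul (hA _) (bdTn ω) (abs_nonneg _) (by linarith)
    simpa only [mul_smul] using this
  have i3 : Integrable (fun ω => ((scalarWalk ξ a n ω / n) ^ 2 / 4) • g ω) μ := by
    refine ig _ (((hT.div_const _).pow_const 2).div_const 4) (A ^ 2 / 4) fun ω => ?_
    rw [abs_div, abs_pow, abs_of_pos (by norm_num : (0 : ℝ) < 4)]
    have := pow_le_pow_left₀ (abs_nonneg _) (bdTn ω) 2
    linarith
  have i4 : Integrable (fun ω => (1 / 2 / (n : ℝ) * scalarWalk ξ b n ω) • g ω) μ := by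
    refine ig _ (hTb.const_mul _) (1 / 2 / n * (A ^ 2 * n)) fun ω => ?_
    rw [abs_mul, abs_of_nonneg (by positivity : 0 ≤ 1 / 2 / (n : ℝ))]
    exact mul_le_mul_of_nonneg_left (bdTb ω) (by positivity)
  have e : ∀ ω, ((a (ξ (n + 1) ω) - scalarWalk ξ a n ω / (2 * n)) ^ 2) • g ω
      = (v • g ω + b (ξ (n + 1) ω) • g ω) - a (ξ (n + 1) ω) • ((scalarWalk ξ a n ω / n) • g ω)
        + ((scalarWalk ξ a n ω / n) ^ 2 / 4) • g ω := fun ω => by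
    rw [smul_smul, ← add_smul, ← sub_smul, ← add_smul]; congr 1
    simp only [hb]; field_simp; ring
  have i5 : Integrable (fun ω => v • g ω) μ := i0.smul v
  have i6 : Integrable (fun ω => v • g ω + b (ξ (n + 1) ω) • g ω) μ := i5.add i1
  have i7 : Integrable (fun ω => (v • g ω + b (ξ (n + 1) ω) • g ω)
      - a (ξ (n + 1) ω) • ((scalarWalk ξ a n ω / n) • g ω)) μ := i6.sub i2
  have e2 : ∀ ω, (1 / 2 / (n : ℝ) * scalarWalk ξ a n ω) • ((scalarWalk ξ a n ω / n) • g ω)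
      = (2 : ℝ) • (((scalarWalk ξ a n ω / n) ^ 2 / 4) • g ω) := fun ω => by
    rw [smul_smul, smul_smul]; congr 1; field_simp; ring
  have tot : ∫ ω, ((a (ξ (n + 1) ω) - scalarWalk ξ a n ω / (2 * n)) ^ 2) • g ω ∂μ
      - v • ∫ ω, g ω ∂μ = ∫ ω, ((1 / 2 / (n : ℝ) * scalarWalk ξ b n ω) • g ω
        - ((scalarWalk ξ a n ω / n) ^ 2 / 4) • g ω) ∂μ := by
    simp only [e]
    rw [integral_add i7 i3, integral_sub i6 i2, integral_add i5 i1, integral_smul, d1, d2,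
      integral_sub i4 i3]
    simp only [e2]
    rw [integral_smul, two_smul]
    abel
  rw [tot]
  have hr0 : 0 < r := by linarith
  -- AM-GM replaces the Cauchy-Schwarz inequality
  have pt : ∀ ω, ‖(1 / 2 / (n : ℝ) * scalarWalk ξ b n ω) • g ω
        - ((scalarWalk ξ a n ω / n) ^ 2 / 4) • g ω‖
      ≤ (1 / 4 * (r / r ^ 8) * scalarWalk ξ b n ω ^ 2 + 1 / (4 * r))
        + 1 / (4 * r ^ 8) * scalarWalk ξ a n ω ^ 2 := by
    intro ω
    rw [← sub_smul, norm_smul]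
    refine (mul_le_of_le_one_right (norm_nonneg _) (hC ω)).trans ?_
    refine (norm_sub_le _ _).trans ?_
    refine add_le_add ?_ (le_of_eq ?_)
    · rw [← hr, Real.norm_eq_abs, abs_mul, abs_of_nonneg (by positivity : 0 ≤ 1 / 2 / r ^ 4),
        ← sq_abs (scalarWalk ξ b n ω)]
      generalize |scalarWalk ξ b n ω| = y
      have : 1 / 4 * (r / r ^ 8) * y ^ 2 + 1 / (4 * r) - 1 / 2 / r ^ 4 * y
          = (y / r ^ 3 - 1) ^ 2 * r / (4 * r ^ 2) := by field_simp; ring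
      have h2 : 0 ≤ (y / r ^ 3 - 1) ^ 2 * r / (4 * r ^ 2) := by positivity
      linarith
    · rw [Real.norm_of_nonneg (by positivity), ← hr]
      field_simp
  have hsq : √(n : ℝ) = r ^ 2 := by
    rw [← hr, show r ^ 4 = (r ^ 2) ^ 2 by ring, Real.sqrt_sq (by positivity)]
  have m1 := h.second_moment_critical hlam ha hA hn
  have m2 := h.second_moment_critical hlam (a := b) hv hB hn
  rw [hsq, ← hr] at m1 m2
  have j1 := h.integrable_sq a n
  have j2 := h.integrable_sq b n
  have j3 : Integrable (fun ω => 1 / 4 * (r / r ^ 8) * scalarWalk ξ b n ω ^ 2 + 1 / (4 * r)) μ :=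
    (j2.const_mul _).add (integrable_const _)
  have j4 : Integrable (fun ω => 1 / (4 * r ^ 8) * scalarWalk ξ a n ω ^ 2) μ := j1.const_mul _
  refine (norm_integral_le_integral_norm _).trans ?_
  refine (integral_mono ((i4.sub i3).norm) (j3.add j4) pt).trans ?_
  rw [integral_add' j3 j4, integral_add (j2.const_mul _) (integrable_const _), integral_const_mul,
    integral_const_mul]
  simp only [integral_const, probReal_univ, smul_eq_mul, one_mul]
  have hA2 : 1 ≤ A ^ 2 := one_le_pow₀ hA1
  calc _ ≤ (1 / 4 * (r / r ^ 8) * (2 * (A ^ 2) ^ 2 * (r ^ 4 * r ^ 2)) + 1 / (4 * r))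
        + 1 / (4 * r ^ 8) * (2 * A ^ 2 * (r ^ 4 * r ^ 2)) := by gcongr
    _ = (A ^ 4 / 2 + 1 / 4 + A ^ 2 / 2 / r) / r := by field_simp; ring
    _ ≤ (2 * A ^ 4) / r := by
        gcongr
        have : A ^ 2 / 2 / r ≤ A ^ 2 / 2 := div_le_self (by positivity) hr1
        nlinarith

end IsReinforced

end Reinforced

/-! ### Elementary estimates -/

lemma norm_exp_taylor_two (z : ℝ) :
    ‖Complex.exp (Complex.I * z) - (1 + Complex.I * z - (z : ℂ) ^ 2 / 2)‖ ≤ 4 * |z| ^ 3 := by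
  have hI : ‖Complex.I * (z : ℂ)‖ = |z| := by simp
  rcases le_or_gt |z| 1 with hz | hz
  · have := Complex.exp_bound (x := Complex.I * z) (by rw [hI]; exact hz) (n := 3) (by norm_num)
    simp only [Finset.sum_range_succ, Finset.sum_range_zero, hI] at this
    have e : (1 + Complex.I * z - (z : ℂ) ^ 2 / 2) = 0 + (Complex.I * (z : ℂ)) ^ 0 / (Nat.factorial 0)
      + (Complex.I * (z : ℂ)) ^ 1 / (Nat.factorial 1)
      + (Complex.I * (z : ℂ)) ^ 2 / (Nat.factorial 2) := by
        simp [Nat.factorial, mul_pow]; ring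
    rw [e]
    refine this.trans ?_
    rw [mul_comm]
    refine mul_le_mul_of_nonneg_right ?_ (by positivity)
    norm_num [Nat.factorial]
  · have h1 : ‖Complex.exp (Complex.I * z)‖ = 1 := Complex.norm_exp_I_mul_ofReal z
    have h2 : ‖1 + Complex.I * z - (z : ℂ) ^ 2 / 2‖ ≤ 1 + |z| + |z| ^ 2 / 2 := by
      refine (norm_sub_le _ _).trans (add_le_add ((norm_add_le _ _).trans ?_) ?_)
      · simp
      · simp
    refine (norm_sub_le _ _).trans ?_
    rw [h1]
    have a1 : |z| ≤ |z| ^ 3 := le_self_pow₀ hz.le (by norm_num)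
    have a2 : |z| ^ 2 ≤ |z| ^ 3 := pow_le_pow_right₀ hz.le (by norm_num)
    linarith

lemma abs_exp_neg_sub_le {c : ℝ} (hc : 0 ≤ c) : |Real.exp (-c) - (1 - c)| ≤ c ^ 2 := by
  rcases le_or_gt c 1 with h | h
  · have := Real.abs_exp_sub_one_sub_id_le (x := -c) (by rwa [abs_neg, abs_of_nonneg hc])
    rw [neg_sq] at this
    convert this using 2; ring
  · have h1 : Real.exp (-c) ≤ 1 := Real.exp_le_one_iff.2 (by linarith)
    have h2 := Real.add_one_le_exp (-c)
    rw [abs_le]; constructor <;> nlinarith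

/-- `(1 + 1/(2n)) / √(n+1)` agrees with `1 / √n` up to `n ^ (-5/2)`: rescaling `T_n` by `√n`
makes it a martingale up to a summable drift. -/
lemma rescaling_error {n : ℝ} (hn : 1 ≤ n) :
    |(1 + 1 / (2 * n)) / √(n + 1) - 1 / √n| ≤ 1 / (n * n * √n) := by
  have hn0 : 0 < n := by linarith
  set s := √n with hs
  set t := √(n + 1) with ht
  have s2 : s ^ 2 = n := Real.sq_sqrt hn0.le
  have t2 : t ^ 2 = n + 1 := Real.sq_sqrt (by linarith)
  have s0 : 0 < s := Real.sqrt_pos.2 hn0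
  have t0 : 0 < t := Real.sqrt_pos.2 (by linarith)
  have st : s ≤ t := Real.sqrt_le_sqrt (by linarith)
  have s1 : 1 ≤ s := Real.one_le_sqrt.2 hn
  have e : (1 + 1 / (2 * n)) / t - 1 / s
      = 1 / (4 * n) / ((s + 1 / (2 * s) + t) * (s * t)) := by
    rw [← s2] at t2 ⊢
    have : t ^ 2 * 4 * s ^ 2 = 4 * s ^ 4 + 4 * s ^ 2 := by rw [t2]; ring
    field_simp
    ring_nf
    nlinarith
  rw [e, abs_of_pos (by positivity), div_div]
  apply one_div_le_one_div_of_le (by positivity)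
  calc n * n * s = n * 1 * (s * (s * s)) := by rw [← s2]; ring
    _ ≤ n * 4 * ((s + 1 / (2 * s) + t) * (s * t)) := by
        have : 0 ≤ 1 / (2 * s) := by positivity
        gcongr
        · norm_num
        · linarith
    _ = _ := by ring

/-! ### Recursion for the characteristic function -/

section Reinforced

variable {Ω : Type*} {m : ℕ} {p : ℝ} {ξ : ℕ → Ω → Fin m} [MeasurableSpace Ω] {μ : Measure Ω}

/-- The characteristic function at `θ` of `T_n(a) / √n`. -/
def walkChar (μ : Measure Ω) (ξ : ℕ → Ω → Fin m) (a : Fin m → ℝ) (θ : ℝ) (n : ℕ) : ℂ :=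
  ∫ ω, Complex.exp (Complex.I * ((θ * (scalarWalk ξ a n ω / √n) : ℝ) : ℂ)) ∂μ

namespace IsReinforced

set_option maxHeartbeats 800000 in
/-- One step of the characteristic function of `T_n / √n` multiplies it by
`exp (-θ² v / (2 (n + 1)))`, up to an error of order `n ^ (-5/4)`, which is summable. Here `r` is
the fourth root of `n`. -/
lemma walkChar_step [IsProbabilityMeasure μ] (h : IsReinforced μ p ξ)
    (hlam : p - (1 - p) / ((m : ℝ) - 1) = 1 / 2)
    {a : Fin m → ℝ} (ha : ∑ i, a i = 0) {A : ℝ} (hA1 : 1 ≤ A) (hA : ∀ i, |a i| ≤ A)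
    {v : ℝ} (hv0 : 0 ≤ v) (hvA : v ≤ A ^ 2) (hv : ∑ i, (a i ^ 2 - v) = 0)
    {n : ℕ} (hn : 1 ≤ n) {r : ℝ} (hr1 : 1 ≤ r) (hr : r ^ 4 = n) (θ : ℝ) :
    ‖walkChar μ ξ a θ (n + 1)
        - (Real.exp (-(θ ^ 2 * v / 2 * (1 / ((n : ℝ) + 1)))) : ℂ) * walkChar μ ξ a θ n‖
      ≤ 40 * A ^ 4 * (|θ| + |θ| ^ 2 + |θ| ^ 3 + |θ| ^ 4) * (1 / r ^ 5) := by
  have hn' : (1 : ℝ) ≤ n := by exact_mod_cast hn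
  have hn0 : (0 : ℝ) < n := by linarith
  have hr0 : 0 < r := by linarith
  have hA0 : 0 < A := by linarith
  have hsq : √(n : ℝ) = r ^ 2 := by
    rw [← hr, show r ^ 4 = (r ^ 2) ^ 2 by ring, Real.sqrt_sq (by positivity)]
  set t := √((n : ℝ) + 1) with ht
  have t2 : t ^ 2 = n + 1 := Real.sq_sqrt (by linarith)
  have t0 : 0 < t := Real.sqrt_pos.2 (by linarith)
  have rt : r ^ 2 ≤ t := by rw [← hsq]; exact Real.sqrt_le_sqrt (by linarith)
  set T := scalarWalk ξ a n with hT
  set x : Ω → ℝ := fun ω => a (ξ (n + 1) ω) - T ω / (2 * n) with hx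
  set g : Ω → ℂ := fun ω => Complex.exp (Complex.I * ((θ * (T ω / √n) : ℝ) : ℂ)) with hg
  have hTm : Measurable[stepFiltration ξ n] T := measurable_scalarWalk_step a n
  have hgF : Measurable[stepFiltration ξ n] g := by
    have h1 : Measurable[stepFiltration ξ n] (fun ω => θ * (T ω / √n)) :=
      (hTm.div_const _).const_mul _
    exact Complex.measurable_exp.comp
      ((Complex.measurable_ofReal.comp h1).const_mul Complex.I)
  have hgm : Measurable g := hgF.mono (h.stepFiltration_le n) le_rfl
  have hgn : ∀ ω, ‖g ω‖ = 1 := fun ω => Complex.norm_exp_I_mul_ofReal _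
  have hgC : ∀ ω, ‖g ω‖ ≤ 1 := fun ω => (hgn ω).le
  have hxm : Measurable x :=
    (h.measurable_comp a (n + 1)).sub ((h.measurable_scalarWalk a n).div_const _)
  have bdT : ∀ ω, |T ω| ≤ A * n := abs_scalarWalk_le hA n
  have bdx : ∀ ω, |x ω| ≤ 2 * A := fun ω => by
    refine (abs_sub _ _).trans ?_
    have : |T ω / (2 * n)| ≤ A := by
      rw [abs_div, abs_of_pos (by positivity : (0 : ℝ) < 2 * n), div_le_iff₀ (by positivity)]
      nlinarith [bdT ω]
    linarith [hA (ξ (n + 1) ω)]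
  set φ' := fun ω => Complex.exp (Complex.I *
    ((θ * (scalarWalk ξ a (n + 1) ω / √((n + 1 : ℕ) : ℝ)) : ℝ) : ℂ)) with hφ'
  have hφ'm : Measurable φ' := by
    have h1 : Measurable (fun ω => θ * (scalarWalk ξ a (n + 1) ω / √((n + 1 : ℕ) : ℝ))) :=
      ((h.measurable_scalarWalk a (n + 1)).div_const _).const_mul _
    exact Complex.measurable_exp.comp
      ((Complex.measurable_ofReal.comp h1).const_mul Complex.I)
  -- second-order Taylor approximation of the next characteristic exponential
  set q : Ω → ℂ := fun ω => g ω + (Complex.I * (θ / t : ℝ)) * (x ω • g ω)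
    - ((θ / t : ℝ) ^ 2 / 2 : ℂ) * ((x ω) ^ 2 • g ω) with hq
  have pt : ∀ ω, ‖φ' ω - q ω‖ ≤ 32 * A ^ 3 * (|θ| + |θ| ^ 3) * (1 / r ^ 5) := by
    intro ω
    have e1 : θ * (scalarWalk ξ a (n + 1) ω / √((n + 1 : ℕ) : ℝ))
        = θ * (T ω / √n) + θ / t * x ω
          + θ * T ω * ((1 + 1 / (2 * n)) / t - 1 / √n) := by
      rw [scalarWalk_succ]
      push_cast
      rw [← ht]
      simp only [hx, ← hT]
      have : √(n : ℝ) ≠ 0 := by rw [hsq]; positivity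
      field_simp
      ring
    -- `D` is the defect from the martingale property, of order `n ^ (-3/2)`
    set D := θ * T ω * ((1 + 1 / (2 * n)) / t - 1 / √n) with hD
    have hDb : |D| ≤ |θ| * A * (1 / r ^ 5) := by
      rw [hD, abs_mul, abs_mul]
      have h1 := rescaling_error hn'
      rw [← ht] at h1
      calc _ ≤ |θ| * (A * n) * (1 / (n * n * √n)) := by
            gcongr
            exact bdT ω
        _ = |θ| * A * (1 / r ^ 6) := by rw [hsq, ← hr]; field_simp
        _ ≤ _ := by
            gcongr
            norm_num
    have e2 : φ' ω = g ω * Complex.exp (Complex.I * ((θ / t * x ω : ℝ) : ℂ))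
        * Complex.exp (Complex.I * (D : ℂ)) := by
      simp only [hφ', hg]
      rw [e1, ← Complex.exp_add, ← Complex.exp_add]
      push_cast; ring_nf
    set z := θ / t * x ω with hz
    have hzb : |z| ^ 3 ≤ 8 * A ^ 3 * |θ| ^ 3 * (1 / r ^ 5) := by
      have : |z| ≤ 2 * A * |θ| * (1 / r ^ 2) := by
        rw [hz, abs_mul, abs_div, abs_of_pos t0]
        calc _ ≤ |θ| / r ^ 2 * (2 * A) := by
              gcongr
              exact bdx ω
          _ = _ := by ring
      calc _ ≤ (2 * A * |θ| * (1 / r ^ 2)) ^ 3 := by gcongr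
        _ = 8 * A ^ 3 * |θ| ^ 3 * (1 / r ^ 6) := by field_simp; ring
        _ ≤ _ := by
            gcongr
            norm_num
    have e3 : q ω = g ω * (1 + Complex.I * z - (z : ℂ) ^ 2 / 2) := by
      simp only [hq, Complex.real_smul, hz]
      push_cast; ring
    have e4 : φ' ω - q ω = g ω * Complex.exp (Complex.I * (z : ℂ))
          * (Complex.exp (Complex.I * (D : ℂ)) - 1)
        + g ω * (Complex.exp (Complex.I * (z : ℂ)) - (1 + Complex.I * z - (z : ℂ) ^ 2 / 2)) := by
      rw [e2, e3]; ring
    rw [e4]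
    refine (norm_add_le _ _).trans ?_
    rw [norm_mul, norm_mul, norm_mul, hgn, Complex.norm_exp_I_mul_ofReal, one_mul, one_mul, one_mul]
    have b1 := Real.norm_exp_I_mul_ofReal_sub_one_le (x := D)
    have b2 := norm_exp_taylor_two z
    rw [Real.norm_eq_abs] at b1
    have hAA : A ≤ 32 * A ^ 3 := by nlinarith [le_self_pow₀ hA1 (by norm_num : 3 ≠ 0)]
    have b3 : |θ| * A * (1 / r ^ 5) ≤ |θ| * (32 * A ^ 3) * (1 / r ^ 5) := by gcongr
    calc _ ≤ |θ| * (32 * A ^ 3) * (1 / r ^ 5) + 4 * (8 * A ^ 3 * |θ| ^ 3 * (1 / r ^ 5)) := by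
          linarith
      _ = _ := by ring
  have ix : ∀ (f : Ω → ℝ), Measurable f → ∀ c : ℝ, (∀ ω, |f ω| ≤ c) →
      Integrable (fun ω => f ω • g ω) μ := by
    intro f hf c hc
    refine integrable_of_bdd (hf.smul hgm) (c * 1) fun ω => ?_
    rw [norm_smul]
    exact mul_le_mul (hc _) (hgC ω) (norm_nonneg _) ((abs_nonneg _).trans (hc ω))
  have i0 : Integrable g μ := integrable_of_bdd hgm 1 hgC
  have i1 := ix x hxm _ bdx
  have i2 := ix (fun ω => x ω ^ 2) (hxm.pow_const 2) ((2 * A) ^ 2) fun ω => by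
    rw [abs_pow]; exact pow_le_pow_left₀ (abs_nonneg _) (bdx ω) 2
  have i3 : Integrable (fun ω => g ω + (Complex.I * (θ / t : ℝ)) * (x ω • g ω)) μ :=
    i0.add (i1.const_mul _)
  have iq : Integrable q μ := i3.sub (i2.const_mul _)
  have iφ : Integrable φ' μ :=
    integrable_of_bdd hφ'm 1 fun ω => (Complex.norm_exp_I_mul_ofReal _).le
  have hz1 : ∫ ω, x ω • g ω ∂μ = 0 := h.integral_incr hlam ha hn hgF hgC
  have hz2 := h.integral_incr_sq hlam ha hA1 hA hv0 hvA hv hn hr1 hr hgF hgC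
  have hφn : walkChar μ ξ a θ n = ∫ ω, g ω ∂μ := rfl
  have hφn' : walkChar μ ξ a θ (n + 1) = ∫ ω, φ' ω ∂μ := rfl
  have hq1 : ∫ ω, q ω ∂μ = ∫ ω, g ω ∂μ - ((θ / t : ℝ) ^ 2 / 2 : ℂ) * ∫ ω, (x ω) ^ 2 • g ω ∂μ := by
    simp only [hq]
    rw [integral_sub i3 (i2.const_mul _), integral_add i0 (i1.const_mul _), integral_const_mul,
      integral_const_mul, hz1, mul_zero, add_zero]
  set G := ∫ ω, g ω ∂μ with hG
  have hGn : ‖G‖ ≤ 1 := by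
    refine (norm_integral_le_of_norm_le_const (ae_of_all _ hgC)).trans ?_
    simp
  set Q := ∫ ω, (x ω) ^ 2 • g ω ∂μ with hQ
  have hzQ : ‖Q - v • G‖ ≤ 2 * A ^ 4 / r := hz2
  set c := θ ^ 2 * v / 2 * (1 / ((n : ℝ) + 1)) with hc
  have hc0 : 0 ≤ c := by positivity
  have p1 : ‖∫ ω, φ' ω ∂μ - ∫ ω, q ω ∂μ‖ ≤ 32 * A ^ 3 * (|θ| + |θ| ^ 3) * (1 / r ^ 5) := by
    rw [← integral_sub iφ iq]
    refine (norm_integral_le_of_norm_le_const (ae_of_all _ pt)).trans ?_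
    simp
  have e5 : ∫ ω, q ω ∂μ - (Real.exp (-c) : ℂ) * G
      = - (((θ ^ 2 / 2 / (n + 1) : ℝ) : ℂ) * (Q - v • G))
        - ((Real.exp (-c) - (1 - c) : ℝ) : ℂ) * G := by
    have tt : ((θ / t : ℝ) : ℂ) ^ 2 = ((θ ^ 2 / (n + 1) : ℝ) : ℂ) := by
      rw [← Complex.ofReal_pow, div_pow, t2]
    rw [hq1, tt, Complex.real_smul, hc]
    push_cast
    ring
  have hr4 : r ^ 4 ≤ (n : ℝ) + 1 := by linarith
  have p2 : ‖((θ ^ 2 / 2 / (n + 1) : ℝ) : ℂ) * (Q - v • G)‖ ≤ A ^ 4 * |θ| ^ 2 * (1 / r ^ 5) := by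
    rw [norm_mul, Complex.norm_real, Real.norm_of_nonneg (by positivity), sq_abs]
    calc _ ≤ θ ^ 2 / 2 / r ^ 4 * (2 * A ^ 4 / r) := by gcongr
      _ = _ := by field_simp
  have p3 : ‖((Real.exp (-c) - (1 - c) : ℝ) : ℂ) * G‖ ≤ A ^ 4 * |θ| ^ 4 * (1 / r ^ 5) := by
    rw [norm_mul, Complex.norm_real, Real.norm_eq_abs]
    calc _ ≤ c ^ 2 * 1 := by
          gcongr
          exact abs_exp_neg_sub_le hc0
      _ ≤ (θ ^ 2 * A ^ 2 / 1 * (1 / r ^ 4)) ^ 2 * 1 := by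
          rw [hc]; gcongr; norm_num
      _ = A ^ 4 * |θ| ^ 4 * (1 / r ^ 8) := by
          rw [show |θ| ^ 4 = (|θ| ^ 2) ^ 2 by ring, sq_abs]; field_simp
      _ ≤ _ := by
          gcongr
          norm_num
  rw [hφn, hφn']
  calc _ = ‖(∫ ω, φ' ω ∂μ - ∫ ω, q ω ∂μ) + (∫ ω, q ω ∂μ - (Real.exp (-c) : ℂ) * G)‖ := by
        congr 1; ring
    _ ≤ 32 * A ^ 3 * (|θ| + |θ| ^ 3) * (1 / r ^ 5)
        + (A ^ 4 * |θ| ^ 2 * (1 / r ^ 5) + A ^ 4 * |θ| ^ 4 * (1 / r ^ 5)) := by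
        refine (norm_add_le _ _).trans (add_le_add p1 ?_)
        rw [e5]
        refine (norm_sub_le _ _).trans (add_le_add ?_ p3)
        rw [norm_neg]; exact p2
    _ ≤ 40 * A ^ 4 * (|θ| + |θ| ^ 3) * (1 / r ^ 5)
        + (40 * A ^ 4 * |θ| ^ 2 * (1 / r ^ 5) + 40 * A ^ 4 * |θ| ^ 4 * (1 / r ^ 5)) := by
        gcongr
        · norm_num
        · norm_num
        · linarith [pow_pos hA0 4]
        · linarith [pow_pos hA0 4]
    _ = _ := by ring

/-- The characteristic function of `T_n / √n` at `θ` is close to the Gaussian one with variance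
`v H_n`, where `H_n` is the harmonic number, uniformly in `n`. -/
lemma exists_walkChar_bound [IsProbabilityMeasure μ] (h : IsReinforced μ p ξ)
    (hlam : p - (1 - p) / ((m : ℝ) - 1) = 1 / 2)
    {a : Fin m → ℝ} (ha : ∑ i, a i = 0) {v : ℝ} (hv0 : 0 ≤ v) (hv : ∑ i, (a i ^ 2 - v) = 0) :
    ∃ K : ℝ, ∀ n : ℕ, 1 ≤ n → ∀ θ : ℝ,
      ‖walkChar μ ξ a θ n - (Real.exp (-(θ ^ 2 * v / 2 * (harmonic n : ℝ))) : ℂ)‖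
        ≤ K * (|θ| + |θ| ^ 2 + |θ| ^ 3 + |θ| ^ 4) := by
  obtain ⟨A₀, hA₀⟩ := (Set.finite_range a).isBounded.exists_norm_le
  set A := max (max 1 A₀) (max 1 v) with hAdef
  have hA1 : 1 ≤ A := (le_max_left 1 A₀).trans (le_max_left _ _)
  have hA : ∀ i, |a i| ≤ A := fun i =>
    (hA₀ _ ⟨i, rfl⟩).trans ((le_max_right 1 A₀).trans (le_max_left _ _))
  have hvA' : v ≤ A := (le_max_right 1 v).trans (le_max_right _ _)
  have hvA : v ≤ A ^ 2 := hvA'.trans (le_self_pow₀ hA1 (by norm_num))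
  have hsum : Summable (fun n : ℕ => (n : ℝ) ^ (-(5 / 4) : ℝ)) :=
    Real.summable_nat_rpow.2 (by norm_num)
  set S := ∑' n : ℕ, (n : ℝ) ^ (-(5 / 4) : ℝ) with hS
  have main : ∀ n : ℕ, 1 ≤ n → ∀ θ : ℝ,
      ‖walkChar μ ξ a θ n - (Real.exp (-(θ ^ 2 * v / 2 * (harmonic n : ℝ))) : ℂ)‖
        ≤ (2 * A + 40 * A ^ 4 * ∑ k ∈ Finset.range n, (k : ℝ) ^ (-(5 / 4) : ℝ))
          * (|θ| + |θ| ^ 2 + |θ| ^ 3 + |θ| ^ 4) := by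
    intro n hn θ
    induction n, hn using Nat.le_induction with
    | base =>
      have e1 : walkChar μ ξ a θ 1 - (Real.exp (-(θ ^ 2 * v / 2 * (harmonic 1 : ℝ))) : ℂ)
          = (walkChar μ ξ a θ 1 - 1) - ((Real.exp (-(θ ^ 2 * v / 2)) - 1 : ℝ) : ℂ) := by
        simp [harmonic]
      have b1 : ‖walkChar μ ξ a θ 1 - 1‖ ≤ A * |θ| := by
        have hm : Measurable fun ω =>
            Complex.exp (Complex.I * ((θ * (scalarWalk ξ a 1 ω / √(1 : ℕ)) : ℝ) : ℂ)) := by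
          have h1 : Measurable (fun ω => θ * (scalarWalk ξ a 1 ω / √((1 : ℕ) : ℝ))) :=
            ((h.measurable_scalarWalk a 1).div_const _).const_mul _
          exact Complex.measurable_exp.comp
            ((Complex.measurable_ofReal.comp h1).const_mul Complex.I)
        have i1 := integrable_of_bdd (μ := μ) hm 1
          fun ω => (Complex.norm_exp_I_mul_ofReal _).le
        have e2 : walkChar μ ξ a θ 1 - 1 = ∫ ω, (Complex.exp (Complex.I *
            ((θ * (scalarWalk ξ a 1 ω / √(1 : ℕ)) : ℝ) : ℂ)) - 1) ∂μ := by
          rw [integral_sub i1 (integrable_const _)]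
          simp [walkChar]
        rw [e2]
        refine (norm_integral_le_of_norm_le_const (C := A * |θ|) (ae_of_all _ fun ω => ?_)).trans
          (by simp)
        refine Real.norm_exp_I_mul_ofReal_sub_one_le.trans ?_
        rw [scalarWalk_one, norm_mul, mul_comm]
        simp only [Nat.cast_one, Real.sqrt_one, div_one]
        exact mul_le_mul_of_nonneg_right (hA _) (norm_nonneg _)
      have b2 : ‖((Real.exp (-(θ ^ 2 * v / 2)) - 1 : ℝ) : ℂ)‖ ≤ A * |θ| ^ 2 := by
        rw [Complex.norm_real, Real.norm_eq_abs, sq_abs]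
        have hpos : 0 ≤ θ ^ 2 * v := by positivity
        have h1 : Real.exp (-(θ ^ 2 * v / 2)) ≤ 1 := Real.exp_le_one_iff.2 (by linarith)
        have h2 := Real.add_one_le_exp (-(θ ^ 2 * v / 2))
        have h3 : θ ^ 2 * v ≤ A * θ ^ 2 := by nlinarith [sq_nonneg θ]
        rw [abs_le]; constructor <;> nlinarith
      rw [e1]
      refine (norm_sub_le _ _).trans ((add_le_add b1 b2).trans ?_)
      have : (2 * A) * (|θ| + |θ| ^ 2 + |θ| ^ 3 + |θ| ^ 4) - (A * |θ| + A * |θ| ^ 2)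
        = A * |θ| + A * |θ| ^ 2 + 2 * A * |θ| ^ 3 + 2 * A * |θ| ^ 4 := by ring
      have h0 : 0 ≤ A * |θ| + A * |θ| ^ 2 + 2 * A * |θ| ^ 3 + 2 * A * |θ| ^ 4 := by positivity
      simp only [Finset.sum_range_one, Nat.cast_zero]
      rw [Real.zero_rpow (by norm_num)]
      linarith
    | succ n hn ih =>
      have hn' : (1 : ℝ) ≤ n := by exact_mod_cast hn
      have hr1 : 1 ≤ (n : ℝ) ^ (1 / 4 : ℝ) := Real.one_le_rpow hn' (by norm_num)
      have hr : ((n : ℝ) ^ (1 / 4 : ℝ)) ^ 4 = n := by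
        rw [← Real.rpow_natCast, ← Real.rpow_mul (by linarith)]; norm_num
      have hr5 : 1 / ((n : ℝ) ^ (1 / 4 : ℝ)) ^ 5 = (n : ℝ) ^ (-(5 / 4) : ℝ) := by
        rw [← Real.rpow_natCast, ← Real.rpow_mul (by linarith), Real.rpow_neg (by linarith),
          one_div]
        norm_num
      have st := h.walkChar_step hlam ha hA1 hA hv0 hvA hv hn hr1 hr θ
      rw [hr5] at st
      set c := θ ^ 2 * v / 2 * (1 / ((n : ℝ) + 1)) with hc
      have hc0 : 0 ≤ c := by positivity
      have e1 : (Real.exp (-(θ ^ 2 * v / 2 * (harmonic (n + 1) : ℝ))) : ℂ)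
          = (Real.exp (-c) : ℂ) * (Real.exp (-(θ ^ 2 * v / 2 * (harmonic n : ℝ))) : ℂ) := by
        rw [← Complex.ofReal_mul, ← Real.exp_add, harmonic_succ, hc]
        congr 2
        push_cast
        ring
      have e2 : walkChar μ ξ a θ (n + 1)
            - (Real.exp (-(θ ^ 2 * v / 2 * (harmonic (n + 1) : ℝ))) : ℂ)
          = (walkChar μ ξ a θ (n + 1) - (Real.exp (-c) : ℂ) * walkChar μ ξ a θ n)
            + (Real.exp (-c) : ℂ) * (walkChar μ ξ a θ n
              - (Real.exp (-(θ ^ 2 * v / 2 * (harmonic n : ℝ))) : ℂ)) := by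
        rw [e1]; ring
      rw [e2, Finset.sum_range_succ]
      refine (norm_add_le _ _).trans ?_
      have b2 : ‖(Real.exp (-c) : ℂ) * (walkChar μ ξ a θ n
              - (Real.exp (-(θ ^ 2 * v / 2 * (harmonic n : ℝ))) : ℂ))‖
          ≤ ‖walkChar μ ξ a θ n - (Real.exp (-(θ ^ 2 * v / 2 * (harmonic n : ℝ))) : ℂ)‖ := by
        rw [norm_mul]
        refine mul_le_of_le_one_left (norm_nonneg _) ?_
        rw [Complex.norm_real, Real.norm_of_nonneg (Real.exp_pos _).le]
        exact Real.exp_le_one_iff.2 (by linarith)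
      calc _ ≤ _ := add_le_add st (b2.trans ih)
        _ = _ := by ring
  refine ⟨2 * A + 40 * A ^ 4 * S, fun n hn θ => (main n hn θ).trans ?_⟩
  gcongr
  exact hsum.sum_le_tsum _ fun k _ => by positivity

/-- In the subcritical regime `T_n / √n` is bounded in `L¹`. -/
lemma exists_first_moment_bound [IsProbabilityMeasure μ] (h : IsReinforced μ p ξ) {lam : ℝ}
    (hlam : p - (1 - p) / ((m : ℝ) - 1) = lam) (h0 : 0 ≤ lam) (h1 : lam < 1 / 2)
    {a : Fin m → ℝ} (ha : ∑ i, a i = 0) :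
    ∃ K : ℝ, ∀ n : ℕ, 1 ≤ n → ∫ ω, |scalarWalk ξ a n ω / √n| ∂μ ≤ K := by
  obtain ⟨A, hA⟩ := (Set.finite_range a).isBounded.exists_norm_le
  have hA' : ∀ i, |a i| ≤ A := fun i => hA _ ⟨i, rfl⟩
  refine ⟨1 + A ^ 2 / (1 - 2 * lam), fun n hn => ?_⟩
  have hn0 : (0 : ℝ) < n := by exact_mod_cast hn
  have m2 := h.second_moment_subcritical hlam h0 h1 ha hA' hn
  have j1 := h.integrable_sq a n
  have pt : ∀ ω, |scalarWalk ξ a n ω / √n| ≤ 1 + 1 / n * scalarWalk ξ a n ω ^ 2 := fun ω => by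
    have e : 1 / n * scalarWalk ξ a n ω ^ 2 = |scalarWalk ξ a n ω / √n| ^ 2 := by
      rw [sq_abs, div_pow, Real.sq_sqrt hn0.le]; ring
    rw [e]
    nlinarith [sq_nonneg (|scalarWalk ξ a n ω / √n| - 1)]
  have j2 : Integrable (fun ω => 1 / (n : ℝ) * scalarWalk ξ a n ω ^ 2) μ := j1.const_mul _
  refine (integral_mono_of_nonneg (ae_of_all _ fun _ => abs_nonneg _)
    ((integrable_const 1).add j2) (ae_of_all _ pt)).trans ?_
  rw [integral_add' (integrable_const 1) j2, integral_const_mul]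
  simp only [integral_const, probReal_univ, smul_eq_mul, one_mul]
  gcongr
  calc _ ≤ 1 / (n : ℝ) * (A ^ 2 / (1 - 2 * lam) * n) := by gcongr
    _ = _ := by field_simp

end IsReinforced

end Reinforced

/-! ### Gaussian laws and convergence of characteristic functions -/

section Gaussian

variable {d : ℕ}

lemma charFun_map_toLp {Ω : Type*} [MeasurableSpace Ω] (μ : Measure Ω) {X : Ω → Fin d → ℝ}
    (hX : Measurable X) (t : EuclideanSpace ℝ (Fin d)) :
    charFun (μ.map (fun ω => WithLp.toLp 2 (X ω))) t
      = ∫ ω, Complex.exp (Complex.I * ((t.ofLp ⬝ᵥ X ω : ℝ) : ℂ)) ∂μ := by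
  have hm : Measurable (fun ω => WithLp.toLp 2 (X ω)) :=
    (WithLp.measurable_toLp 2 (Fin d → ℝ)).comp hX
  rw [charFun_apply, integral_map hm.aemeasurable (by fun_prop)]
  refine integral_congr_ae (ae_of_all _ fun ω => ?_)
  simp only
  rw [mul_comm]
  congr 3

/-- The multivariate Gaussian of Mathlib, transported to `Fin d → ℝ`, has the prescribed
one-dimensional marginals. -/
lemma isCenteredGaussianCov_multivariateGaussian {S : Matrix (Fin d) (Fin d) ℝ}
    (hS : S.PosSemidef) :
    IsCenteredGaussianCov ((multivariateGaussian 0 S).map WithLp.ofLp) S := by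
  have hm : Measurable (WithLp.ofLp : EuclideanSpace ℝ (Fin d) → Fin d → ℝ) :=
    WithLp.measurable_ofLp 2 (Fin d → ℝ)
  refine ⟨Measure.isProbabilityMeasure_map hm.aemeasurable, fun l => ?_⟩
  have hl : Measurable (fun x : Fin d → ℝ => l ⬝ᵥ x) := by
    unfold dotProduct; fun_prop
  have hS0 : 0 ≤ l ⬝ᵥ S *ᵥ l := by simpa using hS.dotProduct_mulVec_nonneg l
  rw [Measure.map_map hl hm]
  have : IsProbabilityMeasure ((multivariateGaussian 0 S).map
      ((fun x : Fin d → ℝ => l ⬝ᵥ x) ∘ WithLp.ofLp)) :=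
    Measure.isProbabilityMeasure_map (hl.comp hm).aemeasurable
  refine Measure.ext_of_charFun ?_
  ext t
  rw [charFun_gaussianReal, charFun_apply_real, integral_map (hl.comp hm).aemeasurable
    (by fun_prop)]
  have key := charFun_multivariateGaussian (μ := 0) hS (WithLp.toLp 2 (t • l))
  rw [charFun_apply] at key
  convert key using 2
  · ext x
    congr 2
    rw [← Complex.ofReal_mul]
    congr 1
    simp only [Function.comp, PiLp.inner_apply, dotProduct, Finset.mul_sum]
    refine Finset.sum_congr rfl fun i _ => ?_
    simp; ring
  · simp only [Matrix.mulVec_smul, smul_dotProduct, dotProduct_smul, smul_eq_mul, inner_zero_right]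
    rw [Real.coe_toNNReal _ hS0]
    push_cast
    ring

end Gaussian

lemma tendsto_harmonic_div_log :
    Tendsto (fun n : ℕ => (harmonic n : ℝ) / Real.log n) atTop (𝓝 1) := by
  have hlog : Tendsto (fun n : ℕ => Real.log n) atTop atTop :=
    Real.tendsto_log_atTop.comp tendsto_natCast_atTop_atTop
  have h1 := Real.tendsto_harmonic_sub_log.div_atTop hlog
  have h2 := h1.add_const 1
  rw [zero_add] at h2
  refine h2.congr' ?_
  filter_upwards [hlog.eventually_gt_atTop 0] with n hn
  field_simp
  ring

/-- Convergence of all characteristic functions of linear functionals of the walk.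
The sequence `ξ` is critical and `η` is subcritical. -/
lemma tendsto_integral_exp_mixed {Ω : Type*} [MeasurableSpace Ω] {μ : Measure Ω}
    [IsProbabilityMeasure μ] {m m' : ℕ} {p lam : ℝ} {ξ : ℕ → Ω → Fin m} {η : ℕ → Ω → Fin m'}
    (hξ : IsReinforced μ p ξ) (hη : IsReinforced μ p η)
    (hlam : p - (1 - p) / ((m : ℝ) - 1) = 1 / 2)
    (hlam' : p - (1 - p) / ((m' : ℝ) - 1) = lam) (h0 : 0 ≤ lam) (h1 : lam < 1 / 2)
    {a : Fin m → ℝ} (ha : ∑ i, a i = 0) {v : ℝ} (hv0 : 0 ≤ v) (hv : ∑ i, (a i ^ 2 - v) = 0)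
    {b : Fin m' → ℝ} (hb : ∑ j, b j = 0) :
    Tendsto (fun n : ℕ => ∫ ω, Complex.exp (Complex.I *
        (((√((n : ℝ) * Real.log n))⁻¹ * (scalarWalk ξ a n ω + scalarWalk η b n ω) : ℝ) : ℂ)) ∂μ)
      atTop (𝓝 ((Real.exp (-(v / 2)) : ℝ) : ℂ)) := by
  obtain ⟨K, hK⟩ := hξ.exists_walkChar_bound hlam ha hv0 hv
  obtain ⟨K', hK'⟩ := hη.exists_first_moment_bound hlam' h0 h1 hb
  have hlog : Tendsto (fun n : ℕ => Real.log n) atTop atTop :=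
    Real.tendsto_log_atTop.comp tendsto_natCast_atTop_atTop
  set θ : ℕ → ℝ := fun n => (√(Real.log n))⁻¹ with hθ
  have hθ0 : Tendsto θ atTop (𝓝 0) :=
    tendsto_inv_atTop_zero.comp (Real.tendsto_sqrt_atTop.comp hlog)
  have hθnn : ∀ n, 0 ≤ θ n := fun n => inv_nonneg.2 (Real.sqrt_nonneg _)
  have hmeas : ∀ {y : Ω → ℝ}, Measurable y →
      Integrable (fun ω => Complex.exp (Complex.I * ((y ω : ℝ) : ℂ))) μ := by
    intro y hy
    refine IsReinforced.integrable_of_bdd (Complex.measurable_exp.comp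
      ((Complex.measurable_ofReal.comp hy).const_mul Complex.I)) 1
      fun ω => (Complex.norm_exp_I_mul_ofReal _).le
  have hbound : ∀ n : ℕ, 1 ≤ n →
      ‖∫ ω, Complex.exp (Complex.I * (((√((n : ℝ) * Real.log n))⁻¹
          * (scalarWalk ξ a n ω + scalarWalk η b n ω) : ℝ) : ℂ)) ∂μ
        - (Real.exp (-((θ n) ^ 2 * v / 2 * (harmonic n : ℝ))) : ℂ)‖
      ≤ θ n * K' + K * (|θ n| + |θ n| ^ 2 + |θ n| ^ 3 + |θ n| ^ 4) := by
    intro n hn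
    have hTa := hξ.measurable_scalarWalk a n
    have hTb := hη.measurable_scalarWalk b n
    have m1 : Measurable (fun ω => θ n * (scalarWalk ξ a n ω / √n)) :=
      (hTa.div_const _).const_mul _
    have m2 : Measurable (fun ω => (√((n : ℝ) * Real.log n))⁻¹
        * (scalarWalk ξ a n ω + scalarWalk η b n ω)) := (hTa.add hTb).const_mul _
    have e1 : ∀ ω, (√((n : ℝ) * Real.log n))⁻¹ * (scalarWalk ξ a n ω + scalarWalk η b n ω)
        = θ n * (scalarWalk ξ a n ω / √n) + θ n * (scalarWalk η b n ω / √n) := fun ω => by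
      rw [Real.sqrt_mul (Nat.cast_nonneg n), mul_inv]; simp only [hθ]; ring
    have pt : ∀ ω, ‖Complex.exp (Complex.I * (((√((n : ℝ) * Real.log n))⁻¹
          * (scalarWalk ξ a n ω + scalarWalk η b n ω) : ℝ) : ℂ))
        - Complex.exp (Complex.I * ((θ n * (scalarWalk ξ a n ω / √n) : ℝ) : ℂ))‖
        ≤ θ n * |scalarWalk η b n ω / √n| := fun ω => by
      rw [e1]
      set y := θ n * (scalarWalk ξ a n ω / √n)
      set z := θ n * (scalarWalk η b n ω / √n) with hz
      have e2 : Complex.exp (Complex.I * ((y + z : ℝ) : ℂ)) - Complex.exp (Complex.I * (y : ℂ))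
          = Complex.exp (Complex.I * (y : ℂ)) * (Complex.exp (Complex.I * (z : ℂ)) - 1) := by
        push_cast; rw [mul_add, Complex.exp_add]; ring
      rw [e2, norm_mul, Complex.norm_exp_I_mul_ofReal, one_mul]
      refine Real.norm_exp_I_mul_ofReal_sub_one_le.trans (le_of_eq ?_)
      rw [hz, Real.norm_eq_abs, abs_mul, abs_of_nonneg (hθnn n)]
    have ib : Integrable (fun ω => |scalarWalk η b n ω / √n|) μ := by
      obtain ⟨B, hB⟩ := (Set.finite_range b).isBounded.exists_norm_le
      have hB' : ∀ i, |b i| ≤ B := fun i => hB _ ⟨i, rfl⟩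
      refine (IsReinforced.integrable_of_bdd (hTb.div_const _) (B * n / √n) fun ω => ?_).abs
      rw [Real.norm_eq_abs, abs_div, abs_of_nonneg (Real.sqrt_nonneg _)]
      gcongr
      exact abs_scalarWalk_le hB' n ω
    have b1 : ‖∫ ω, Complex.exp (Complex.I * (((√((n : ℝ) * Real.log n))⁻¹
          * (scalarWalk ξ a n ω + scalarWalk η b n ω) : ℝ) : ℂ)) ∂μ - walkChar μ ξ a (θ n) n‖
        ≤ θ n * K' := by
      rw [walkChar, ← integral_sub (hmeas m2) (hmeas m1)]
      refine (norm_integral_le_integral_norm _).trans ?_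
      refine (integral_mono ((hmeas m2).sub (hmeas m1)).norm (ib.const_mul (θ n)) pt).trans ?_
      rw [integral_const_mul]
      exact mul_le_mul_of_nonneg_left (hK' n hn) (hθnn n)
    refine le_trans ?_ (add_le_add b1 (hK n hn (θ n)))
    refine le_trans (le_of_eq ?_) (norm_add_le _ _)
    congr 1; ring
  have hlim0 : Tendsto (fun n => θ n * K' + K * (|θ n| + |θ n| ^ 2 + |θ n| ^ 3 + |θ n| ^ 4))
      atTop (𝓝 0) := by
    have hc : Continuous (fun x : ℝ => x * K' + K * (|x| + |x| ^ 2 + |x| ^ 3 + |x| ^ 4)) := by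
      fun_prop
    have h := (hc.tendsto 0).comp hθ0
    simp only [Function.comp_def] at h
    simpa only [abs_zero, zero_mul, zero_add, mul_zero, add_zero, ne_eq, OfNat.ofNat_ne_zero,
      not_false_eq_true, zero_pow] using h
  have hdiff : Tendsto (fun n : ℕ => ∫ ω, Complex.exp (Complex.I * (((√((n : ℝ) * Real.log n))⁻¹
          * (scalarWalk ξ a n ω + scalarWalk η b n ω) : ℝ) : ℂ)) ∂μ
        - (Real.exp (-((θ n) ^ 2 * v / 2 * (harmonic n : ℝ))) : ℂ)) atTop (𝓝 0) := by
    refine squeeze_zero_norm' ?_ hlim0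
    filter_upwards [eventually_ge_atTop 1] with n hn using hbound n hn
  have hexp : Tendsto (fun n : ℕ => ((Real.exp (-((θ n) ^ 2 * v / 2 * (harmonic n : ℝ))) : ℝ) : ℂ))
      atTop (𝓝 ((Real.exp (-(v / 2)) : ℝ) : ℂ)) := by
    refine (Complex.continuous_ofReal.tendsto _).comp ((Real.continuous_exp.tendsto _).comp ?_)
    refine Tendsto.neg ?_
    have h3 := tendsto_harmonic_div_log.const_mul (v / 2)
    rw [mul_one] at h3
    refine h3.congr fun n => ?_
    simp only [hθ]
    rw [inv_pow, Real.sq_sqrt (Real.log_natCast_nonneg n)]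
    ring
  simpa using hdiff.add hexp

/-- **Mixed critical regime for the Type-II ERW**: if `m > m'` (so `p_c^m < p_c^{m'}`)
and `p = p_c^m = (m+1)/(2m)`, then `(S_{2n} - n(ū + w̄))/√(n log n)` converges in
distribution to the centered Gaussian on `ℝ^d` with covariance `Σ(U)`: the contribution
of the `w`-steps is negligible at this scaling. -/
theorem typeII_ERW_mixed_critical_clt
    {Ω : Type*} [MeasurableSpace Ω] (μ : Measure Ω) [IsProbabilityMeasure μ]
    (d m m' : ℕ) (hm : 2 ≤ m) (hm' : 2 ≤ m') (hmm' : m' < m)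
    (u : Fin m → Fin d → ℝ) (hu : Function.Injective u)
    (w : Fin m' → Fin d → ℝ) (hw : Function.Injective w)
    (p : ℝ) (hp : p = ((m : ℝ) + 1) / (2 * m))
    (i0 : Fin m) (j0 : Fin m') (ξ : ℕ → Ω → Fin m) (η : ℕ → Ω → Fin m')
    (hERW : IsTypeIIERW μ m m' p i0 j0 ξ η)
    (ub wb : Fin d → ℝ) (hub : ub = (m : ℝ)⁻¹ • ∑ i, u i)
    (hwb : wb = (m' : ℝ)⁻¹ • ∑ j, w j)
    (SigmaU : Matrix (Fin d) (Fin d) ℝ)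
    (hSigmaU : SigmaU = (m : ℝ)⁻¹ • ∑ i, Matrix.vecMulVec (u i - ub) (u i - ub)) :
    ∃ ν : Measure (Fin d → ℝ), IsCenteredGaussianCov ν SigmaU ∧
      ∀ f : BoundedContinuousFunction (Fin d → ℝ) ℝ,
        Tendsto (fun n : ℕ => ∫ ω, f ((Real.sqrt ((n : ℝ) * Real.log n))⁻¹ •
            (∑ k ∈ Finset.Icc 1 n, (u (ξ k ω) + w (η k ω)) - (n : ℝ) • (ub + wb))) ∂μ)
          atTop (𝓝 (∫ x, f x ∂ν)) := by
  have hm2 : (2 : ℝ) ≤ m := by exact_mod_cast hm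
  have hm2' : (2 : ℝ) ≤ m' := by exact_mod_cast hm'
  have hmm : (m' : ℝ) < m := by exact_mod_cast hmm'
  have hξ : IsReinforced μ p ξ := ⟨hERW.measurable_fst, hERW.cond_fst⟩
  have hη : IsReinforced μ p η := ⟨hERW.measurable_snd, hERW.cond_snd⟩
  have hlam : p - (1 - p) / ((m : ℝ) - 1) = 1 / 2 := by
    have : (m : ℝ) - 1 ≠ 0 := by linarith
    rw [hp]; field_simp; ring
  have h1p : 1 - p = ((m : ℝ) - 1) / (2 * m) := by rw [hp]; field_simp; ring
  -- the second sequence is subcritical: `0 ≤ λ' < 1 / 2`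
  have hlam1 : p - (1 - p) / ((m' : ℝ) - 1) < 1 / 2 := by
    rw [← hlam]
    have hpos : 0 < 1 - p := by
      rw [h1p]; exact div_pos (by linarith) (by linarith)
    have : (1 - p) / ((m : ℝ) - 1) < (1 - p) / ((m' : ℝ) - 1) :=
      div_lt_div_of_pos_left hpos (by linarith) (by linarith)
    linarith
  have hlam0 : 0 ≤ p - (1 - p) / ((m' : ℝ) - 1) := by
    have hpos : 0 ≤ 1 - p := by
      rw [h1p]; exact div_nonneg (by linarith) (by linarith)
    have h2 : (1 - p) / ((m' : ℝ) - 1) ≤ 1 - p := div_le_self hpos (by linarith)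
    have h3 : 1 / 2 ≤ p := by
      rw [hp, div_le_div_iff₀ (by norm_num) (by linarith)]; linarith
    linarith
  have hS : SigmaU.PosSemidef := by
    rw [hSigmaU]
    refine Matrix.PosSemidef.smul (Matrix.posSemidef_sum _ fun i _ => ?_) (by positivity)
    simpa using Matrix.posSemidef_vecMulVec_self_star (u i - ub)
  have hsumu : ∑ i, (u i - ub) = 0 := by
    rw [Finset.sum_sub_distrib, hub]
    simp only [Finset.sum_const, Finset.card_univ, Fintype.card_fin, ← Nat.cast_smul_eq_nsmul ℝ]
    rw [smul_smul, mul_inv_cancel₀ (by linarith), one_smul, sub_self]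
  have hsumw : ∑ j, (w j - wb) = 0 := by
    rw [Finset.sum_sub_distrib, hwb]
    simp only [Finset.sum_const, Finset.card_univ, Fintype.card_fin, ← Nat.cast_smul_eq_nsmul ℝ]
    rw [smul_smul, mul_inv_cancel₀ (by linarith), one_smul, sub_self]
  set X : ℕ → Ω → Fin d → ℝ := fun n ω => (Real.sqrt ((n : ℝ) * Real.log n))⁻¹ •
            (∑ k ∈ Finset.Icc 1 n, (u (ξ k ω) + w (η k ω)) - (n : ℝ) • (ub + wb)) with hX
  have hXm : ∀ n, Measurable (X n) := by
    intro n
    have h1 : ∀ k, Measurable (fun ω => u (ξ k ω) + w (η k ω)) := fun k =>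
      ((measurable_of_finite u).comp (hξ.measurable k)).add
        ((measurable_of_finite w).comp (hη.measurable k))
    exact ((Finset.measurable_fun_sum _ fun k _ => h1 k).sub_const _).const_smul
      (√((n : ℝ) * Real.log n))⁻¹
  -- every linear functional of the rescaled walk is a sum of two centred scalar walks
  have hproj : ∀ (l : Fin d → ℝ) n ω, l ⬝ᵥ X n ω = (√((n : ℝ) * Real.log n))⁻¹ *
      (scalarWalk ξ (fun i => l ⬝ᵥ (u i - ub)) n ω
        + scalarWalk η (fun j => l ⬝ᵥ (w j - wb)) n ω) := by
    intro l n ω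
    simp only [hX, scalarWalk]
    rw [dotProduct_smul, smul_eq_mul, ← Finset.sum_add_distrib]
    congr 1
    simp only [← dotProduct_add]
    rw [← dotProduct_sum]
    congr 1
    have : ∀ k, u (ξ k ω) - ub + (w (η k ω) - wb) = (u (ξ k ω) + w (η k ω)) - (ub + wb) :=
      fun k => by abel
    simp only [this]
    rw [Finset.sum_sub_distrib]
    simp [← Nat.cast_smul_eq_nsmul ℝ]
  have hvar : ∀ l : Fin d → ℝ,
      l ⬝ᵥ SigmaU *ᵥ l = (m : ℝ)⁻¹ * ∑ i, (l ⬝ᵥ (u i - ub)) ^ 2 := by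
    intro l
    rw [hSigmaU, Matrix.smul_mulVec, dotProduct_smul, smul_eq_mul, Matrix.sum_mulVec,
      dotProduct_sum]
    congr 1
    refine Finset.sum_congr rfl fun i _ => ?_
    rw [Matrix.vecMulVec_mulVec]
    simp [dotProduct_smul, dotProduct_comm, sq]
  have hchar : ∀ l : Fin d → ℝ, Tendsto (fun n : ℕ => ∫ ω, Complex.exp (Complex.I *
      ((l ⬝ᵥ X n ω : ℝ) : ℂ)) ∂μ) atTop
        (𝓝 ((Real.exp (-((l ⬝ᵥ SigmaU *ᵥ l) / 2)) : ℝ) : ℂ)) := by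
    intro l
    simp only [hproj]
    refine tendsto_integral_exp_mixed hξ hη hlam rfl hlam0 hlam1 ?_ ?_ ?_ ?_
    · rw [← dotProduct_sum, hsumu, dotProduct_zero]
    · rw [hvar]; positivity
    · rw [Finset.sum_sub_distrib, hvar]
      simp only [Finset.sum_const, Finset.card_univ, Fintype.card_fin, nsmul_eq_mul]
      rw [← mul_assoc, mul_inv_cancel₀ (by linarith), one_mul, sub_self]
    · rw [← dotProduct_sum, hsumw, dotProduct_zero]
  have hofm : Measurable (WithLp.ofLp : EuclideanSpace ℝ (Fin d) → Fin d → ℝ) :=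
    WithLp.measurable_ofLp 2 (Fin d → ℝ)
  have htom : ∀ n, Measurable (fun ω => WithLp.toLp 2 (X n ω)) := fun n =>
    (WithLp.measurable_toLp 2 (Fin d → ℝ)).comp (hXm n)
  refine ⟨(multivariateGaussian 0 SigmaU).map WithLp.ofLp,
    isCenteredGaussianCov_multivariateGaussian hS, fun f => ?_⟩
  -- Lévy's theorem in `EuclideanSpace ℝ (Fin d)`, where characteristic functions are available
  let P : ℕ → ProbabilityMeasure (EuclideanSpace ℝ (Fin d)) := fun n =>
    ⟨μ.map (fun ω => WithLp.toLp 2 (X n ω)),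
      Measure.isProbabilityMeasure_map (htom n).aemeasurable⟩
  let P₀ : ProbabilityMeasure (EuclideanSpace ℝ (Fin d)) :=
    ⟨multivariateGaussian 0 SigmaU, inferInstance⟩
  have hP : Tendsto P atTop (𝓝 P₀) := by
    rw [ProbabilityMeasure.tendsto_iff_tendsto_charFun]
    intro t
    have e0 : charFun (P₀ : Measure (EuclideanSpace ℝ (Fin d))) t
        = ((Real.exp (-((t.ofLp ⬝ᵥ SigmaU *ᵥ t.ofLp) / 2)) : ℝ) : ℂ) := by
      refine (charFun_multivariateGaussian hS t).trans ?_
      simp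
    rw [e0]
    refine (hchar t.ofLp).congr fun n => ?_
    exact (charFun_map_toLp μ (hXm n) t).symm
  rw [ProbabilityMeasure.tendsto_iff_forall_integral_tendsto] at hP
  have hfin := hP (f.compContinuous ⟨WithLp.ofLp, PiLp.continuous_ofLp 2 _⟩)
  rw [integral_map hofm.aemeasurable f.continuous.aestronglyMeasurable]
  refine hfin.congr fun n => ?_
  refine (integral_map (htom n).aemeasurable ?_).trans rfl
  exact (BoundedContinuousFunction.continuous _).aestronglyMeasurable
end
end

section
/- Moments of the superdiffusive limit for the Type-I ERW: assume ū = 0, the first step index ξ_1 is uniformly distributed on {1,…,m}, p > p_c^m = (m+1)/(2m), and set a = (mp−1)/(m−1). Suppose L̃ is an ℝ^d-valued random vector such that S_n/n^a → L̃ almost surely and in L² as n → ∞. Then 𝔼[L̃] = 0 and 𝔼[L̃ L̃^⊤] = (1/((2a−1)·Γ(2a)))·Σ(U), where Γ denotes the Gamma function. -/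
/-!
Write `b = (1 - p) / (m - 1)`, so that `a = p - b`. For a weight `f` on the step indices with zero
sum, the reinforcement rule gives `𝔼[f(ξ_{n+1}) | ξ_1, …, ξ_n] = (a / n) ∑_{k ≤ n} f(ξ_k)`
(`integral_mul_step_succ`, in integrated form). The uniform law is invariant under reinforcement,
so every step is uniform (`integral_step`). Hence `𝔼[S_n] = 0`, and expanding
`S_{n+1} S_{n+1}ᵀ` yields `V_{n+1} = (1 + 2a / n) V_n + Σ(U)`, `V_1 = Σ(U)`, for
`V_n = 𝔼[S_n S_nᵀ]`. The solution is `V_n = c_n Σ(U)` with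
`c_n = n / (2a - 1) * (Γ(n + 2a) / (Γ(n + 1) Γ(2a)) - 1)` (`integral_erwSum_mul_erwSum`), and
Euler's limit formula for `Γ` gives `c_n / n^{2a} → 1 / ((2a - 1) Γ(2a))`, because `2a > 1`
(`tendsto_secondMomentCoeff`).

Fatou's lemma together with these bounded second moments shows that the limit is square integrable
(`memLp_two_of_ae_tendsto`); `L²` convergence then transfers first and second moments to the limit
by continuity of the inner product (`tendsto_integral_mul_of_L2`).
-/

open MeasureTheory ProbabilityTheory Filter Finset Topology Matrix

noncomputable section

/-- A Type-I elephant random walk with memory parameter `p` whose first step index is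
uniformly distributed on `{1,…,m}`. -/
structure IsTypeIERWUniform {Ω : Type*} [MeasurableSpace Ω] (μ : Measure Ω)
    (m : ℕ) (p : ℝ) (ξ : ℕ → Ω → Fin m) : Prop where
  measurable : ∀ n, Measurable (ξ n)
  first_uniform : ∀ i : Fin m, μ {ω | ξ 1 ω = i} = (1 : ENNReal) / m
  cond : ∀ n : ℕ, 1 ≤ n → ∀ j : Fin m,
    (μ[(fun ω => if ξ (n + 1) ω = j then (1 : ℝ) else 0) | stepFiltration ξ n]) =ᵐ[μ]
      (fun ω => (1 / (n : ℝ)) * ∑ k ∈ Finset.Icc 1 n,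
        (p * (if ξ k ω = j then (1 : ℝ) else 0)
          + ((1 - p) / ((m : ℝ) - 1)) * (if ξ k ω = j then (0 : ℝ) else 1)))

/-- The real-valued walk `∑_{k=1}^n f(ξ_k)` obtained by weighting the step `i` by `f i`; each
coordinate of the elephant random walk has this form. -/
def erwSum {Ω : Type*} {m : ℕ} (ξ : ℕ → Ω → Fin m) (f : Fin m → ℝ) (n : ℕ) (ω : Ω) : ℝ :=
  ∑ k ∈ Finset.Icc 1 n, f (ξ k ω)

/-- The solution of `c 1 = 1`, `c (n + 1) = (1 + s / n) * c n + 1`, namely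
`n / (s - 1) * (Γ(n + s) / (Γ(n + 1) Γ(s)) - 1)`, with the Gamma quotient written as a
finite product. -/
def secondMomentCoeff (s : ℝ) (n : ℕ) : ℝ :=
  n * ((∏ j ∈ Finset.range n, (s + j)) / (n.factorial : ℝ) - 1) / (s - 1)

/-! ### The second-moment recursion and its asymptotics -/

lemma secondMomentCoeff_one {s : ℝ} (hs : 1 < s) : secondMomentCoeff s 1 = 1 := by
  have : s - 1 ≠ 0 := by linarith
  simp [secondMomentCoeff, this]

lemma secondMomentCoeff_succ {s : ℝ} (hs : 1 < s) {n : ℕ} (hn : 1 ≤ n) :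
    secondMomentCoeff s (n + 1) = (1 + s / n) * secondMomentCoeff s n + 1 := by
  have h1 : s - 1 ≠ 0 := by linarith
  have h2 : (n : ℝ) ≠ 0 := by positivity
  have h3 : (n.factorial : ℝ) ≠ 0 := by positivity
  have h4 : (n : ℝ) + 1 ≠ 0 := by positivity
  simp only [secondMomentCoeff, Finset.prod_range_succ, Nat.factorial_succ]
  push_cast
  field_simp
  ring

lemma tendsto_secondMomentCoeff {s : ℝ} (hs : 1 < s) :
    Tendsto (fun n : ℕ => secondMomentCoeff s n / (n : ℝ) ^ s) atTop
      (𝓝 (1 / ((s - 1) * Real.Gamma s))) := by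
  have hG : Real.Gamma s ≠ 0 := (Real.Gamma_pos_of_pos (by linarith)).ne'
  have h1 := (Real.GammaSeq_tendsto_Gamma s).inv₀ hG
  have h2 : Tendsto (fun n : ℕ => (n : ℝ) / (n + s)) atTop (𝓝 1) :=
    tendsto_natCast_div_add_atTop s
  have h3 : Tendsto (fun n : ℕ => (n : ℝ) ^ (-(s - 1))) atTop (𝓝 0) :=
    (tendsto_rpow_neg_atTop (by linarith)).comp tendsto_natCast_atTop_atTop
  have h4 := ((h1.mul h2).sub h3).div_const (s - 1)
  have hlim : ((Real.Gamma s)⁻¹ * 1 - 0) / (s - 1) = 1 / ((s - 1) * Real.Gamma s) := by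
    have : s - 1 ≠ 0 := by linarith
    field_simp
    ring
  rw [hlim] at h4
  refine h4.congr' ?_
  filter_upwards [eventually_ge_atTop 1] with n hn
  have hn0 : (0 : ℝ) < n := by exact_mod_cast hn
  have hs1 : s - 1 ≠ 0 := by linarith
  have hpow : (n : ℝ) ^ s ≠ 0 := (Real.rpow_pos_of_pos hn0 s).ne'
  have hfac : (n.factorial : ℝ) ≠ 0 := by positivity
  have hns : (n : ℝ) + s ≠ 0 := by positivity
  have hprod : (∏ j ∈ Finset.range n, (s + (j : ℝ))) ≠ 0 :=
    (Finset.prod_pos fun j _ => by positivity).ne'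
  have hneg : (n : ℝ) ^ (-(s - 1)) = n / (n : ℝ) ^ s := by
    rw [neg_sub, Real.rpow_sub hn0, Real.rpow_one]
  rw [hneg, Real.GammaSeq, Finset.prod_range_succ, secondMomentCoeff, add_comm s (n : ℝ)]
  field_simp

/-! ### Passing to the limit in `L²` -/

section L2

variable {Ω : Type*} [MeasurableSpace Ω] {μ : Measure Ω}

lemma eLpNorm_two_eq_sqrt_integral {X : Ω → ℝ} (hX : MemLp X 2 μ) :
    eLpNorm X 2 μ = ENNReal.ofReal ((∫ ω, X ω ^ 2 ∂μ) ^ (2⁻¹ : ℝ)) := by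
  rw [hX.eLpNorm_eq_integral_rpow_norm two_ne_zero ENNReal.ofNat_ne_top]
  simp

lemma tendsto_integral_mul_of_L2 {X Y : ℕ → Ω → ℝ} {Xlim Ylim : Ω → ℝ}
    (hX : ∀ n, MemLp (X n) 2 μ) (hY : ∀ n, MemLp (Y n) 2 μ)
    (hXlim : MemLp Xlim 2 μ) (hYlim : MemLp Ylim 2 μ)
    (hXX : Tendsto (fun n => ∫ ω, (X n ω - Xlim ω) ^ 2 ∂μ) atTop (𝓝 0))
    (hYY : Tendsto (fun n => ∫ ω, (Y n ω - Ylim ω) ^ 2 ∂μ) atTop (𝓝 0)) :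
    Tendsto (fun n => ∫ ω, X n ω * Y n ω ∂μ) atTop (𝓝 (∫ ω, Xlim ω * Ylim ω ∂μ)) := by
  have key : ∀ {Z : ℕ → Ω → ℝ} {Zlim : Ω → ℝ} (hZ : ∀ n, MemLp (Z n) 2 μ) (hZlim : MemLp Zlim 2 μ),
      Tendsto (fun n => ∫ ω, (Z n ω - Zlim ω) ^ 2 ∂μ) atTop (𝓝 0) →
      Tendsto (fun n => (hZ n).toLp (Z n)) atTop (𝓝 (hZlim.toLp Zlim)) := by
    intro Z Zlim hZ hZlim h
    rw [Lp.tendsto_Lp_iff_tendsto_eLpNorm'']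
    have h1 := ENNReal.tendsto_ofReal (h.rpow_const (p := (2⁻¹ : ℝ)) (Or.inr (by norm_num)))
    rw [Real.zero_rpow (by norm_num), ENNReal.ofReal_zero] at h1
    refine h1.congr fun n => ?_
    rw [eLpNorm_two_eq_sqrt_integral ((hZ n).sub hZlim)]
    rfl
  have inn : ∀ {Z W : Ω → ℝ} (hZ : MemLp Z 2 μ) (hW : MemLp W 2 μ),
      inner ℝ (hZ.toLp Z) (hW.toLp W) = ∫ ω, Z ω * W ω ∂μ := by
    intro Z W hZ hW
    rw [L2.inner_def]
    refine integral_congr_ae ?_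
    filter_upwards [hZ.coeFn_toLp, hW.coeFn_toLp] with ω h1 h2
    rw [h1, h2]
    simp [mul_comm]
  have := (key hX hXlim hXX).inner (key hY hYlim hYY) (𝕜 := ℝ)
  simpa only [inn] using this

/-- Fatou's lemma in `L²`: an almost sure limit of functions with convergent second moments is
square integrable. -/
lemma memLp_two_of_ae_tendsto {X : ℕ → Ω → ℝ} {Xlim : Ω → ℝ} {c : ℝ}
    (hX : ∀ n, MemLp (X n) 2 μ) (hXlim : AEStronglyMeasurable Xlim μ)
    (hae : ∀ᵐ ω ∂μ, Tendsto (fun n => X n ω) atTop (𝓝 (Xlim ω)))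
    (hc : Tendsto (fun n => ∫ ω, X n ω ^ 2 ∂μ) atTop (𝓝 c)) : MemLp Xlim 2 μ := by
  refine ⟨hXlim, ?_⟩
  refine (Lp.eLpNorm_lim_le_liminf_eLpNorm (fun n => (hX n).1) Xlim hae).trans_lt ?_
  have h1 := ENNReal.tendsto_ofReal (hc.rpow_const (p := (2⁻¹ : ℝ)) (Or.inr (by norm_num)))
  simp only [eLpNorm_two_eq_sqrt_integral (hX _)]
  rw [h1.liminf_eq]
  exact ENNReal.ofReal_lt_top

end L2

/-! ### First and second moments of the walk -/

section Moments

variable {Ω : Type*} [MeasurableSpace Ω] {μ : Measure Ω} {m : ℕ} {p : ℝ} {ξ : ℕ → Ω → Fin m}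

lemma stepFiltration_le (hξ : ∀ n, Measurable (ξ n)) (n : ℕ) :
    stepFiltration ξ n ≤ ‹MeasurableSpace Ω› :=
  iSup₂_le fun k _ => (hξ k).comap_le

lemma measurable_comp_step (hξ : ∀ n, Measurable (ξ n)) (f : Fin m → ℝ) (k : ℕ) :
    Measurable (fun ω => f (ξ k ω)) :=
  (measurable_of_countable f).comp (hξ k)

lemma measurable_erwSum (hξ : ∀ n, Measurable (ξ n)) (f : Fin m → ℝ) (n : ℕ) :
    Measurable (erwSum ξ f n) :=
  Finset.measurable_fun_sum _ fun k _ => measurable_comp_step hξ f k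

lemma measurable_erwSum_stepFiltration (f : Fin m → ℝ) (n : ℕ) :
    Measurable[stepFiltration ξ n] (erwSum ξ f n) := by
  refine Finset.measurable_fun_sum _ fun k hk => ?_
  have h1 : MeasurableSpace.comap (ξ k) ⊤ ≤ stepFiltration ξ n :=
    le_iSup₂ (f := fun k (_ : k ∈ Finset.Icc 1 n) => MeasurableSpace.comap (ξ k) ⊤) k hk
  have h2 : Measurable[MeasurableSpace.comap (ξ k) ⊤] (fun ω => f (ξ k ω)) :=
    (measurable_of_countable f).comp (comap_measurable (ξ k))
  exact h2.mono h1 le_rfl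

lemma abs_comp_step_le (f : Fin m → ℝ) (k : ℕ) (ω : Ω) : |f (ξ k ω)| ≤ ∑ i, |f i| :=
  Finset.single_le_sum (f := fun i => |f i|) (fun _ _ => abs_nonneg _) (Finset.mem_univ _)

lemma abs_erwSum_le (f : Fin m → ℝ) (n : ℕ) (ω : Ω) :
    |erwSum ξ f n ω| ≤ n * ∑ i, |f i| := by
  refine (Finset.abs_sum_le_sum_abs _ _).trans ?_
  refine (Finset.sum_le_sum fun k _ => abs_comp_step_le f k ω).trans ?_
  simp

lemma integrable_of_abs_le [IsFiniteMeasure μ] {h : Ω → ℝ} (hm : Measurable h) {C : ℝ}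
    (hC : ∀ ω, |h ω| ≤ C) : Integrable h μ :=
  Integrable.of_bound hm.aestronglyMeasurable C (Eventually.of_forall hC)

lemma integrable_mul_of_abs_le [IsFiniteMeasure μ] {g h : Ω → ℝ} (hg : Measurable g)
    (hh : Measurable h) {C D : ℝ} (hC : ∀ ω, |g ω| ≤ C) (hD : ∀ ω, |h ω| ≤ D) :
    Integrable (fun ω => g ω * h ω) μ :=
  integrable_of_abs_le (C := C * D) (hg.mul hh) fun ω => by
    rw [abs_mul]
    exact mul_le_mul (hC ω) (hD ω) (abs_nonneg _) ((abs_nonneg _).trans (hC ω))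

lemma memLp_erwSum [IsFiniteMeasure μ] (hξ : ∀ n, Measurable (ξ n)) (f : Fin m → ℝ) (n : ℕ) :
    MemLp (erwSum ξ f n) 2 μ :=
  MemLp.of_bound (measurable_erwSum hξ f n).aestronglyMeasurable (n * ∑ i, |f i|)
    (Eventually.of_forall fun ω => abs_erwSum_le f n ω)

lemma erwSum_succ (f : Fin m → ℝ) (n : ℕ) (ω : Ω) :
    erwSum ξ f (n + 1) ω = erwSum ξ f n ω + f (ξ (n + 1) ω) := by
  rw [erwSum, erwSum, Finset.sum_Icc_succ_top (by omega)]

/-- Averaging `f` against the reinforcement rule: the conditional mean of `f(ξ_{n+1})` given the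
past is an affine function of `∑_{k ≤ n} f(ξ_k)`. -/
lemma sum_mul_reinforcement (f : Fin m → ℝ) (b : ℝ) (n : ℕ) (ω : Ω) :
    ∑ j, f j * ((1 / (n : ℝ)) * ∑ k ∈ Finset.Icc 1 n,
        (p * (if ξ k ω = j then (1 : ℝ) else 0) + b * (if ξ k ω = j then (0 : ℝ) else 1)))
      = (1 / (n : ℝ)) * ((p - b) * erwSum ξ f n ω + n * (b * ∑ j, f j)) := by
  have h1 : ∀ k, ∑ j, f j * (p * (if ξ k ω = j then (1 : ℝ) else 0)
      + b * (if ξ k ω = j then (0 : ℝ) else 1)) = (p - b) * f (ξ k ω) + b * ∑ j, f j := by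
    intro k
    have h2 : ∀ j, f j * (p * (if ξ k ω = j then (1 : ℝ) else 0)
        + b * (if ξ k ω = j then (0 : ℝ) else 1))
        = (p - b) * (if ξ k ω = j then f j else 0) + b * f j := by
      intro j
      split_ifs <;> ring
    simp only [h2, Finset.sum_add_distrib, ← Finset.mul_sum, Finset.sum_ite_eq, Finset.mem_univ,
      if_true]
  simp_rw [mul_left_comm (f _), ← Finset.mul_sum]
  congr 1
  simp_rw [Finset.mul_sum (Finset.Icc 1 n)]
  rw [Finset.sum_comm]
  simp only [h1, Finset.sum_add_distrib, ← Finset.mul_sum, erwSum]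
  simp [mul_left_comm]

/-- The integrated form of the defining conditional law, tested against a bounded function of the
first `n` steps. -/
lemma integral_mul_step_succ [IsProbabilityMeasure μ] (hERW : IsTypeIERWUniform μ m p ξ)
    {n : ℕ} (hn : 1 ≤ n) (f : Fin m → ℝ) {h : Ω → ℝ}
    (hh : Measurable[stepFiltration ξ n] h) {C : ℝ} (hC : ∀ ω, |h ω| ≤ C) :
    ∫ ω, h ω * f (ξ (n + 1) ω) ∂μ = ∫ ω, h ω * ((1 / (n : ℝ)) *
      ((p - (1 - p) / ((m : ℝ) - 1)) * erwSum ξ f n ω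
        + n * ((1 - p) / ((m : ℝ) - 1) * ∑ j, f j))) ∂μ := by
  have hle := stepFiltration_le hERW.measurable n
  have hhm : Measurable h := hh.mono hle le_rfl
  have hind : ∀ j : Fin m, Integrable (fun ω => if ξ (n + 1) ω = j then (1 : ℝ) else 0) μ :=
    fun j => integrable_of_abs_le (C := 1)
      (measurable_comp_step hERW.measurable (fun i => if i = j then (1 : ℝ) else 0) (n + 1))
      (fun ω => by split_ifs <;> simp)
  have hhind : ∀ j : Fin m, Integrable
      (fun ω => h ω * (if ξ (n + 1) ω = j then (1 : ℝ) else 0)) μ :=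
    fun j => integrable_mul_of_abs_le (D := 1) hhm
      (measurable_comp_step hERW.measurable (fun i => if i = j then (1 : ℝ) else 0) (n + 1)) hC
      (fun ω => by split_ifs <;> simp)
  have hpull : ∀ j : Fin m,
      μ[(fun ω => h ω * (if ξ (n + 1) ω = j then (1 : ℝ) else 0)) | stepFiltration ξ n] =ᵐ[μ]
      fun ω => h ω * ((1 / (n : ℝ)) * ∑ k ∈ Finset.Icc 1 n,
        (p * (if ξ k ω = j then (1 : ℝ) else 0)
          + ((1 - p) / ((m : ℝ) - 1)) * (if ξ k ω = j then (0 : ℝ) else 1))) := by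
    intro j
    refine (condExp_mul_of_stronglyMeasurable_left hh.stronglyMeasurable (hhind j)
      (hind j)).trans ?_
    filter_upwards [hERW.cond n hn j] with ω hω
    simp only [Pi.mul_apply, hω]
  have hint : ∀ j : Fin m, Integrable (fun ω => h ω * ((1 / (n : ℝ)) * ∑ k ∈ Finset.Icc 1 n,
        (p * (if ξ k ω = j then (1 : ℝ) else 0)
          + ((1 - p) / ((m : ℝ) - 1)) * (if ξ k ω = j then (0 : ℝ) else 1)))) μ :=
    fun j => integrable_condExp.congr (hpull j)
  have hj : ∀ j : Fin m, ∫ ω, h ω * (if ξ (n + 1) ω = j then (1 : ℝ) else 0) ∂μ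
      = ∫ ω, h ω * ((1 / (n : ℝ)) * ∑ k ∈ Finset.Icc 1 n,
        (p * (if ξ k ω = j then (1 : ℝ) else 0)
          + ((1 - p) / ((m : ℝ) - 1)) * (if ξ k ω = j then (0 : ℝ) else 1))) ∂μ := by
    intro j
    rw [← integral_condExp hle]
    exact integral_congr_ae (hpull j)
  have hdecomp : ∀ ω, h ω * f (ξ (n + 1) ω)
      = ∑ j, f j * (h ω * (if ξ (n + 1) ω = j then (1 : ℝ) else 0)) := by
    intro ω
    simp [mul_comm]
  simp_rw [hdecomp, ← sum_mul_reinforcement f]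
  rw [integral_finsetSum _ fun j _ => (hhind j).const_mul _]
  simp_rw [Finset.mul_sum (Finset.univ : Finset (Fin m)), mul_left_comm (h _) (f _)]
  rw [integral_finsetSum _ fun j _ => (hint j).const_mul _]
  simp_rw [integral_const_mul, hj]

lemma integral_erwSum [IsProbabilityMeasure μ] (hERW : IsTypeIERWUniform μ m p ξ)
    (f : Fin m → ℝ) (n : ℕ) :
    ∫ ω, erwSum ξ f n ω ∂μ = ∑ k ∈ Finset.Icc 1 n, ∫ ω, f (ξ k ω) ∂μ :=
  integral_finsetSum _ fun k _ => integrable_of_abs_le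
    (measurable_comp_step hERW.measurable f k) (abs_comp_step_le f k)

/-- Every step is uniformly distributed: the uniform law is invariant under reinforcement. -/
lemma integral_step [IsProbabilityMeasure μ] (hm : 2 ≤ m) (hERW : IsTypeIERWUniform μ m p ξ)
    (f : Fin m → ℝ) {n : ℕ} (hn : 1 ≤ n) :
    ∫ ω, f (ξ n ω) ∂μ = (m : ℝ)⁻¹ * ∑ i, f i := by
  induction n using Nat.strong_induction_on with
  | _ n ih =>
  obtain rfl | ⟨n, rfl, hnl⟩ : n = 1 ∨ ∃ l, n = l + 1 ∧ 1 ≤ l := by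
    rcases Nat.lt_or_ge 1 n with h | h
    · exact Or.inr ⟨n - 1, by omega, by omega⟩
    · exact Or.inl (by omega)
  · have hdecomp : ∀ ω, f (ξ 1 ω) = ∑ j, f j * (if ξ 1 ω = j then (1 : ℝ) else 0) := by
      intro ω
      simp
    have hset : ∀ j, MeasurableSet {ω | ξ 1 ω = j} := fun j =>
      hERW.measurable 1 (measurableSet_singleton j)
    have hone : ∀ j : Fin m, ∫ ω, (if ξ 1 ω = j then (1 : ℝ) else 0) ∂μ = (m : ℝ)⁻¹ := by
      intro j
      have h1 : (fun ω => if ξ 1 ω = j then (1 : ℝ) else 0)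
          = Set.indicator {ω | ξ 1 ω = j} 1 := by
        ext ω
        simp [Set.indicator_apply]
      rw [h1, integral_indicator_one (hset j), Measure.real, hERW.first_uniform j]
      simp
    simp_rw [hdecomp]
    rw [integral_finsetSum _ fun j _ => Integrable.const_mul (integrable_of_abs_le (C := 1)
      (measurable_comp_step hERW.measurable (fun i => if i = j then (1 : ℝ) else 0) 1)
      (fun ω => by split_ifs <;> simp)) _]
    simp_rw [integral_const_mul, hone, ← Finset.sum_mul]
    rw [mul_comm]
  · have hstep := integral_mul_step_succ hERW hnl f (h := fun _ => (1 : ℝ)) measurable_const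
      (C := 1) (by simp)
    simp only [one_mul] at hstep
    have hsum : ∫ ω, erwSum ξ f n ω ∂μ = n * ((m : ℝ)⁻¹ * ∑ i, f i) := by
      rw [integral_erwSum hERW, Finset.sum_congr rfl fun k hk => ih k
        (by have := (Finset.mem_Icc.1 hk).2; omega) (Finset.mem_Icc.1 hk).1]
      simp
    have hi : Integrable (erwSum ξ f n) μ :=
      integrable_of_abs_le (measurable_erwSum hERW.measurable f n) (abs_erwSum_le f n)
    rw [hstep, integral_const_mul, integral_add (hi.const_mul _) (integrable_const _),
      integral_const_mul, hsum, integral_const]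
    have hn0 : (n : ℝ) ≠ 0 := by positivity
    have hm2 : (2 : ℝ) ≤ m := by exact_mod_cast hm
    have hm0 : (m : ℝ) ≠ 0 := by linarith
    have hm1 : (m : ℝ) - 1 ≠ 0 := by linarith
    simp only [probReal_univ, one_smul]
    field_simp
    ring

/-- For weights of zero mean the mixed second moment is a universal multiple of the one-step
covariance. -/
lemma integral_erwSum_mul_erwSum [IsProbabilityMeasure μ] (hm : 2 ≤ m)
    (hERW : IsTypeIERWUniform μ m p ξ) {a : ℝ} (ha : a = ((m : ℝ) * p - 1) / ((m : ℝ) - 1))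
    (ha2 : 1 < 2 * a) (f g : Fin m → ℝ) (hf : ∑ i, f i = 0) (hg : ∑ i, g i = 0)
    {n : ℕ} (hn : 1 ≤ n) :
    ∫ ω, erwSum ξ f n ω * erwSum ξ g n ω ∂μ
      = secondMomentCoeff (2 * a) n * ((m : ℝ)⁻¹ * ∑ i, f i * g i) := by
  have hm2 : (2 : ℝ) ≤ m := by exact_mod_cast hm
  have hm1 : (m : ℝ) - 1 ≠ 0 := by linarith
  have hpa : p - (1 - p) / ((m : ℝ) - 1) = a := by
    rw [ha]
    field_simp
    ring
  induction n, hn using Nat.le_induction with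
  | base =>
    rw [secondMomentCoeff_one ha2, one_mul]
    simpa [erwSum] using integral_step hm hERW (fun i => f i * g i) (n := 1) le_rfl
  | succ n hn ih =>
    have hmeas := hERW.measurable
    have cross : ∀ f g : Fin m → ℝ, ∑ i, g i = 0 →
        ∫ ω, erwSum ξ f n ω * g (ξ (n + 1) ω) ∂μ
          = a / n * ∫ ω, erwSum ξ f n ω * erwSum ξ g n ω ∂μ := by
      intro f g hg
      rw [integral_mul_step_succ hERW hn g (measurable_erwSum_stepFiltration f n)
        (abs_erwSum_le f n), hpa, hg, ← integral_const_mul]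
      congr 1
      ext ω
      ring
    have i1 : Integrable (fun ω => erwSum ξ f n ω * erwSum ξ g n ω) μ :=
      integrable_mul_of_abs_le (measurable_erwSum hmeas f n) (measurable_erwSum hmeas g n)
        (abs_erwSum_le f n) (abs_erwSum_le g n)
    have i2 : Integrable (fun ω => erwSum ξ f n ω * g (ξ (n + 1) ω)) μ :=
      integrable_mul_of_abs_le (measurable_erwSum hmeas f n)
        (measurable_comp_step hmeas g (n + 1)) (abs_erwSum_le f n) (abs_comp_step_le g (n + 1))
    have i3 : Integrable (fun ω => erwSum ξ g n ω * f (ξ (n + 1) ω)) μ :=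
      integrable_mul_of_abs_le (measurable_erwSum hmeas g n)
        (measurable_comp_step hmeas f (n + 1)) (abs_erwSum_le g n) (abs_comp_step_le f (n + 1))
    have i4 : Integrable (fun ω => f (ξ (n + 1) ω) * g (ξ (n + 1) ω)) μ :=
      integrable_mul_of_abs_le (measurable_comp_step hmeas f (n + 1))
        (measurable_comp_step hmeas g (n + 1)) (abs_comp_step_le f (n + 1))
        (abs_comp_step_le g (n + 1))
    have hexp : ∀ ω, erwSum ξ f (n + 1) ω * erwSum ξ g (n + 1) ω
        = ((erwSum ξ f n ω * erwSum ξ g n ω + erwSum ξ f n ω * g (ξ (n + 1) ω))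
          + erwSum ξ g n ω * f (ξ (n + 1) ω)) + f (ξ (n + 1) ω) * g (ξ (n + 1) ω) := by
      intro ω
      rw [erwSum_succ, erwSum_succ]
      ring
    have hcomm : ∫ ω, erwSum ξ g n ω * erwSum ξ f n ω ∂μ
        = ∫ ω, erwSum ξ f n ω * erwSum ξ g n ω ∂μ := by
      congr 1
      ext ω
      ring
    have i12 : Integrable (fun ω => erwSum ξ f n ω * erwSum ξ g n ω
        + erwSum ξ f n ω * g (ξ (n + 1) ω)) μ := i1.add i2
    have i123 : Integrable (fun ω => erwSum ξ f n ω * erwSum ξ g n ω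
        + erwSum ξ f n ω * g (ξ (n + 1) ω) + erwSum ξ g n ω * f (ξ (n + 1) ω)) μ := i12.add i3
    simp_rw [hexp]
    rw [integral_add i123 i4, integral_add i12 i3, integral_add i1 i2,
      cross f g hg, cross g f hf, hcomm, ih, secondMomentCoeff_succ ha2 hn,
      integral_step hm hERW (fun i => f i * g i) (n := n + 1) (by omega)]
    ring

end Moments

/-- **Moments of the superdiffusive limit for the Type-I ERW**: if `ū = 0`, the first
step is uniform, `p > p_c^m` and `S_n/n^a → L̃` a.s. and in `L²`, then `𝔼[L̃] = 0` and
`𝔼[L̃ L̃ᵀ] = (1/((2a-1) Γ(2a))) Σ(U)`. -/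
theorem typeI_ERW_superdiffusive_limit_moments
    {Ω : Type*} [MeasurableSpace Ω] (μ : Measure Ω) [IsProbabilityMeasure μ]
    (d m : ℕ) (hm : 2 ≤ m) (u : Fin m → Fin d → ℝ) (hu : Function.Injective u)
    (p : ℝ) (hp0 : 0 < p) (hp1 : p < 1) (hpc : ((m : ℝ) + 1) / (2 * m) < p)
    (ξ : ℕ → Ω → Fin m) (hERW : IsTypeIERWUniform μ m p ξ)
    (ub : Fin d → ℝ) (hub : ub = (m : ℝ)⁻¹ • ∑ i, u i) (hub0 : ub = 0)
    (SigmaU : Matrix (Fin d) (Fin d) ℝ)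
    (hSigmaU : SigmaU = (m : ℝ)⁻¹ • ∑ i, Matrix.vecMulVec (u i - ub) (u i - ub))
    (a : ℝ) (ha : a = ((m : ℝ) * p - 1) / ((m : ℝ) - 1))
    (L : Ω → Fin d → ℝ) (hL : Measurable L)
    (hae : ∀ᵐ ω ∂μ, Tendsto (fun n : ℕ => ((n : ℝ) ^ a)⁻¹ • ∑ k ∈ Finset.Icc 1 n, u (ξ k ω))
      atTop (𝓝 (L ω)))
    (hL2 : Tendsto (fun n : ℕ =>
        ∫ ω, ‖((n : ℝ) ^ a)⁻¹ • ∑ k ∈ Finset.Icc 1 n, u (ξ k ω) - L ω‖ ^ 2 ∂μ)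
      atTop (𝓝 0)) :
    (∫ ω, L ω ∂μ) = 0 ∧
      ∀ r s : Fin d, ∫ ω, L ω r * L ω s ∂μ =
        (1 / ((2 * a - 1) * Real.Gamma (2 * a))) * SigmaU r s := by
  have hm2 : (2 : ℝ) ≤ m := by exact_mod_cast hm
  have hm1 : (0 : ℝ) < (m : ℝ) - 1 := by linarith
  have ha2 : 1 < 2 * a := by
    rw [div_lt_iff₀ (by linarith)] at hpc
    rw [ha, ← mul_div_assoc, lt_div_iff₀ hm1]
    linarith
  have hmeas := hERW.measurable
  have hsum : ∀ r, ∑ i, u i r = 0 := by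
    intro r
    have h1 := congrFun (hub.symm.trans hub0) r
    have h2 : (m : ℝ) ≠ 0 := by linarith
    simpa [h2] using h1
  let X : Fin d → ℕ → Ω → ℝ := fun r n ω => ((n : ℝ) ^ a)⁻¹ * erwSum ξ (fun i => u i r) n ω
  have hXeq : ∀ (r : Fin d) (n : ℕ) (ω : Ω),
      (((n : ℝ) ^ a)⁻¹ • ∑ k ∈ Finset.Icc 1 n, u (ξ k ω)) r = X r n ω := by
    intro r n ω
    simp [X, erwSum]
  have hX : ∀ r n, MemLp (X r n) 2 μ := fun r n => (memLp_erwSum hmeas _ n).const_mul _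
  have hXX : ∀ r s, Tendsto (fun n => ∫ ω, X r n ω * X s n ω ∂μ) atTop
      (𝓝 (1 / ((2 * a - 1) * Real.Gamma (2 * a)) * SigmaU r s)) := by
    intro r s
    have hS : SigmaU r s = (m : ℝ)⁻¹ * ∑ i, u i r * u i s := by
      rw [hSigmaU, hub0]
      simp [Matrix.sum_apply, Matrix.vecMulVec_apply]
    rw [hS]
    refine ((tendsto_secondMomentCoeff ha2).mul_const _).congr' ?_
    filter_upwards [eventually_ge_atTop 1] with n hn
    have hn0 : (0 : ℝ) < n := by exact_mod_cast hn
    have h1 : ∀ ω, X r n ω * X s n ω = ((n : ℝ) ^ (2 * a))⁻¹ *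
        (erwSum ξ (fun i => u i r) n ω * erwSum ξ (fun i => u i s) n ω) := by
      intro ω
      rw [two_mul, Real.rpow_add hn0, mul_inv]
      simp only [X]
      ring
    simp_rw [h1]
    rw [integral_const_mul,
      integral_erwSum_mul_erwSum hm hERW ha ha2 _ _ (hsum r) (hsum s) hn]
    ring
  -- Square integrability of the limit has to come from almost sure convergence: the integrals in
  -- the `L²` hypothesis would all be zero by convention if `L` were not square integrable.
  have hLr : ∀ r, MemLp (fun ω => L ω r) 2 μ := by
    intro r
    refine memLp_two_of_ae_tendsto (hX r) ((measurable_pi_apply r).comp hL).aestronglyMeasurable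
      ?_ (by simpa only [pow_two] using hXX r r)
    filter_upwards [hae] with ω hω
    exact (tendsto_pi_nhds.1 hω r).congr fun n => hXeq r n ω
  have hmemL : MemLp L 2 μ := MemLp.of_eval hLr
  have hdiff : ∀ r, Tendsto (fun n => ∫ ω, (X r n ω - L ω r) ^ 2 ∂μ) atTop (𝓝 0) := by
    intro r
    refine squeeze_zero (fun n => integral_nonneg fun ω => sq_nonneg _) (fun n => ?_) hL2
    have hmem : MemLp (fun ω => ((n : ℝ) ^ a)⁻¹ • ∑ k ∈ Finset.Icc 1 n, u (ξ k ω) - L ω) 2 μ := by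
      refine MemLp.sub (MemLp.of_eval fun s => ?_) hmemL
      simpa only [hXeq] using hX s n
    refine integral_mono ((hX r n).sub (hLr r)).integrable_sq
      ((memLp_two_iff_integrable_sq_norm hmem.1).1 hmem) fun ω => ?_
    have h1 := norm_le_pi_norm
      (((n : ℝ) ^ a)⁻¹ • ∑ k ∈ Finset.Icc 1 n, u (ξ k ω) - L ω) r
    rw [Pi.sub_apply, hXeq, Real.norm_eq_abs] at h1
    exact (sq_abs _).symm.trans_le (pow_le_pow_left₀ (abs_nonneg _) h1 2)
  refine ⟨?_, fun r s => tendsto_nhds_unique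
    (tendsto_integral_mul_of_L2 (hX r) (hX s) (hLr r) (hLr s) (hdiff r) (hdiff s)) (hXX r s)⟩
  ext r
  rw [eval_integral fun i => (hLr i).integrable (by norm_num)]
  have hone : MemLp (fun _ : Ω => (1 : ℝ)) 2 μ := memLp_const 1
  have h1 := tendsto_integral_mul_of_L2 (hX r) (fun _ => hone) (hLr r) hone (hdiff r) (by simp)
  simp only [mul_one] at h1
  refine tendsto_nhds_unique h1 (tendsto_const_nhds.congr fun n => ?_)
  simp only [X]
  rw [integral_const_mul, integral_erwSum hERW, Finset.sum_eq_zero, mul_zero]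
  · rfl
  · intro k hk
    rw [integral_step hm hERW (fun i => u i r) (Finset.mem_Icc.1 hk).1, hsum r, mul_zero]
end
end

section
/- Moments of the superdiffusive limit for the Type-II ERW: assume m = m', ū = w̄ = 0, the first step indices ξ_1 and η_1 are each uniformly distributed on their index sets, p > p_c^m = (m+1)/(2m), and set a = (mp−1)/(m−1). Suppose L is an ℝ^d-valued random vector such that S_{2n}/n^a → L almost surely and in L² as n → ∞. Then 𝔼[L] = 0 and 𝔼[L L^⊤] = (1/((2a−1)·Γ(2a)))·(Σ(U) + Σ(W)), where Γ denotes the Gamma function. -/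
/-!
For a mean-zero observable `f` of the step indices put `T n = f (ξ 1) + ⋯ + f (ξ n)`. Averaging
`f` against the reinforcement kernel multiplies it by `a = (m p - 1) / (m - 1)`, so
`𝔼[f (ξ (n+1)) | F n] = (a / n) T n` (`IsReinforced.integral_next_mul`). It follows that `𝔼[T n] = 0`,
that every `ξ n` is uniform (`IsReinforced.integral_comp`), and that for two such observables `f`, `g`
the mixed moment `v n` of the partial sums satisfies `v 1 = c` and `v (n+1) = (1 + 2a/n) v n + c`,
where `c` is the covariance of `f` and `g` under the uniform law
(`IsReinforced.integral_stepSum_mul_succ`). This recursion is solved explicitly by a Pochhammer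
product over a factorial minus a linear term. When `2a > 1`, which is the condition `p > p_c`, the
linear term is negligible, and Euler's limit for `Γ` yields `v n / n^(2a) → c / ((2a-1) Γ(2a))`
(`tendsto_of_recursion`).

Applied to the coordinates of `u` and `w`, and with the cross terms between `ξ` and `η` vanishing by
independence and centering, this gives the limits of the first and second moments of `S_{2n} / n^a`.
By Fatou's lemma the almost sure limit `L` is square integrable, so the integrals in the `L²`
hypothesis are genuine and the moments pass to the limit by continuity of the `L²` inner product
(`tendsto_integral_mul`).
-/

open MeasureTheory ProbabilityTheory Filter Finset Topology Matrix

noncomputable section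

/-- A Type-II elephant random walk with memory parameter `p` whose first step indices
are uniformly distributed: two independent reinforced sequences of step indices `ξ`
(values in `Fin m`) and `η` (values in `Fin m'`). -/
structure IsTypeIIERWUniform {Ω : Type*} [MeasurableSpace Ω] (μ : Measure Ω)
    (m m' : ℕ) (p : ℝ) (ξ : ℕ → Ω → Fin m) (η : ℕ → Ω → Fin m') : Prop where
  measurable_fst : ∀ n, Measurable (ξ n)
  measurable_snd : ∀ n, Measurable (η n)
  first_fst_uniform : ∀ i : Fin m, μ {ω | ξ 1 ω = i} = (1 : ENNReal) / m
  first_snd_uniform : ∀ j : Fin m', μ {ω | η 1 ω = j} = (1 : ENNReal) / m'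
  cond_fst : ∀ n : ℕ, 1 ≤ n → ∀ j : Fin m,
    (μ[(fun ω => if ξ (n + 1) ω = j then (1 : ℝ) else 0) | stepFiltration ξ n]) =ᵐ[μ]
      (fun ω => (1 / (n : ℝ)) * ∑ k ∈ Finset.Icc 1 n,
        (p * (if ξ k ω = j then (1 : ℝ) else 0)
          + ((1 - p) / ((m : ℝ) - 1)) * (if ξ k ω = j then (0 : ℝ) else 1)))
  cond_snd : ∀ n : ℕ, 1 ≤ n → ∀ j : Fin m',
    (μ[(fun ω => if η (n + 1) ω = j then (1 : ℝ) else 0) | stepFiltration η n]) =ᵐ[μ]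
      (fun ω => (1 / (n : ℝ)) * ∑ k ∈ Finset.Icc 1 n,
        (p * (if η k ω = j then (1 : ℝ) else 0)
          + ((1 - p) / ((m' : ℝ) - 1)) * (if η k ω = j then (0 : ℝ) else 1)))
  indep : IndepFun (fun ω => fun k => ξ k ω) (fun ω => fun k => η k ω) μ

/-! ### Moments of a single reinforced sequence -/

/-- One reinforced sequence of step indices with a uniform first step: the hypotheses on `ξ`
(or on `η`) alone in `IsTypeIIERWUniform`. -/
structure IsReinforced_s16 {Ω : Type*} [MeasurableSpace Ω] (μ : Measure Ω)
    (m : ℕ) (p : ℝ) (ξ : ℕ → Ω → Fin m) : Prop where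
  meas : ∀ n, Measurable (ξ n)
  first_uniform : ∀ i : Fin m, μ {ω | ξ 1 ω = i} = (1 : ENNReal) / m
  cond : ∀ n : ℕ, 1 ≤ n → ∀ j : Fin m,
    (μ[(fun ω => if ξ (n + 1) ω = j then (1 : ℝ) else 0) | stepFiltration ξ n]) =ᵐ[μ]
      (fun ω => (1 / (n : ℝ)) * ∑ k ∈ Finset.Icc 1 n,
        (p * (if ξ k ω = j then (1 : ℝ) else 0)
          + ((1 - p) / ((m : ℝ) - 1)) * (if ξ k ω = j then (0 : ℝ) else 1)))

/-- The partial sum `f (ξ 1) + ⋯ + f (ξ n)` of a real observable of the step indices. -/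
def stepSum {Ω : Type*} {m : ℕ} (ξ : ℕ → Ω → Fin m) (f : Fin m → ℝ) (n : ℕ) (ω : Ω) : ℝ :=
  ∑ k ∈ Finset.Icc 1 n, f (ξ k ω)

lemma stepSum_succ {Ω : Type*} {m : ℕ} {ξ : ℕ → Ω → Fin m} (f : Fin m → ℝ) (n : ℕ) (ω : Ω) :
    stepSum ξ f (n + 1) ω = stepSum ξ f n ω + f (ξ (n + 1) ω) := by
  unfold stepSum
  rw [Finset.sum_Icc_succ_top (by omega)]

/-- Averaging a mean-zero observable against the reinforcement kernel multiplies it by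
`a = (m p - 1) / (m - 1)`. -/
lemma kernel_average {m : ℕ} {p : ℝ} (hm : 2 ≤ m) {f : Fin m → ℝ} (hf : ∑ i, f i = 0) (i : Fin m) :
    ∑ j, f j * (p * (if i = j then (1 : ℝ) else 0)
      + ((1 - p) / ((m : ℝ) - 1)) * (if i = j then (0 : ℝ) else 1))
      = ((m : ℝ) * p - 1) / ((m : ℝ) - 1) * f i := by
  have hm1 : (m : ℝ) - 1 ≠ 0 := by
    have : (2 : ℝ) ≤ m := by exact_mod_cast hm
    linarith
  have hx : ∀ j, f j * (p * (if i = j then (1 : ℝ) else 0)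
      + ((1 - p) / ((m : ℝ) - 1)) * (if i = j then (0 : ℝ) else 1))
      = ((1 - p) / ((m : ℝ) - 1)) * f j
        + (if i = j then (p - (1 - p) / ((m : ℝ) - 1)) * f j else 0) := by
    intro j
    split_ifs <;> ring
  simp_rw [hx]
  rw [Finset.sum_add_distrib, ← Finset.mul_sum, hf]
  simp
  left
  field_simp
  ring

namespace IsReinforced_s16

variable {Ω : Type*} [MeasurableSpace Ω] {μ : Measure Ω}
  {m : ℕ} {p : ℝ} {ξ : ℕ → Ω → Fin m}

lemma filtration_le (h : IsReinforced_s16 μ m p ξ) (n : ℕ) :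
    stepFiltration ξ n ≤ ‹MeasurableSpace Ω› :=
  iSup₂_le fun k _ => (h.meas k).comap_le

variable [IsProbabilityMeasure μ]

lemma memLp_comp (h : IsReinforced_s16 μ m p ξ) (f : Fin m → ℝ) (n : ℕ) :
    MemLp (fun ω => f (ξ n ω)) 2 μ := by
  refine MemLp.of_bound ((measurable_of_finite f).comp (h.meas n)).aestronglyMeasurable
    (∑ i, ‖f i‖) (ae_of_all _ fun ω => ?_)
  exact Finset.single_le_sum (f := fun i => ‖f i‖) (fun i _ => norm_nonneg _) (mem_univ (ξ n ω))

lemma memLp_stepSum (h : IsReinforced_s16 μ m p ξ) (f : Fin m → ℝ) (n : ℕ) :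
    MemLp (stepSum ξ f n) 2 μ := by
  unfold stepSum
  exact memLp_finsetSum _ fun k _ => h.memLp_comp f k

lemma stronglyMeasurable_stepSum (f : Fin m → ℝ) (n : ℕ) :
    StronglyMeasurable[stepFiltration ξ n] (stepSum ξ f n) := by
  refine Measurable.stronglyMeasurable ?_
  unfold stepSum
  refine Finset.measurable_fun_sum _ fun k hk => ?_
  refine (measurable_of_finite f).comp ?_
  refine Measurable.mono (comap_measurable (ξ k)) ?_ le_rfl
  exact le_iSup₂_of_le k hk le_rfl

/-- The one-step regression `𝔼[f (ξ (n+1)) | F n] = (a / n) (f (ξ 1) + ⋯ + f (ξ n))` for a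
mean-zero observable `f`, tested against an `F n`-measurable `Z`. -/
lemma integral_next_mul (h : IsReinforced_s16 μ m p ξ) (hm : 2 ≤ m) {f : Fin m → ℝ}
    (hf : ∑ i, f i = 0) {n : ℕ} (hn : 1 ≤ n) {Z : Ω → ℝ}
    (hZ : StronglyMeasurable[stepFiltration ξ n] Z) (hZ2 : MemLp Z 2 μ) :
    ∫ ω, f (ξ (n + 1) ω) * Z ω ∂μ =
      ((m : ℝ) * p - 1) / ((m : ℝ) - 1) / n * ∫ ω, stepSum ξ f n ω * Z ω ∂μ := by
  set R : Fin m → Fin m → ℝ := fun j i => p * (if i = j then (1 : ℝ) else 0)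
      + ((1 - p) / ((m : ℝ) - 1)) * (if i = j then (0 : ℝ) else 1) with hR
  have hI : ∀ (g : Fin m → ℝ) k, Integrable (fun ω => g (ξ k ω) * Z ω) μ :=
    fun g k => (h.memLp_comp g k).integrable_mul hZ2
  have hIs : ∀ (g : Fin m → ℝ), Integrable (fun ω => stepSum ξ g n ω * Z ω) μ :=
    fun g => (h.memLp_stepSum g n).integrable_mul hZ2
  have key : ∀ j, ∫ ω, (if ξ (n + 1) ω = j then (1 : ℝ) else 0) * Z ω ∂μ
      = ∫ ω, (1 / (n : ℝ)) * (stepSum ξ (R j) n ω * Z ω) ∂μ := by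
    intro j
    have hind := hI (fun i => if i = j then (1 : ℝ) else 0) (n + 1)
    have hind1 := (h.memLp_comp (fun i => if i = j then (1 : ℝ) else 0) (n + 1)).integrable
      (by norm_num)
    rw [← integral_condExp (h.filtration_le n)]
    refine integral_congr_ae ?_
    filter_upwards [condExp_mul_of_stronglyMeasurable_right hZ hind hind1, h.cond n hn j]
      with ω h1 h2
    refine h1.trans ?_
    rw [Pi.mul_apply, h2]
    simp only [stepSum, hR]
    ring
  have hL : ∀ ω, f (ξ (n + 1) ω) * Z ω
      = ∑ j, f j * ((if ξ (n + 1) ω = j then (1 : ℝ) else 0) * Z ω) := by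
    intro ω
    simp
  have hT : ∀ ω, ∑ j, f j * ((1 / (n : ℝ)) * (stepSum ξ (R j) n ω * Z ω))
      = ((m : ℝ) * p - 1) / ((m : ℝ) - 1) / n * (stepSum ξ f n ω * Z ω) := by
    intro ω
    have : ∑ j, f j * stepSum ξ (R j) n ω
        = ((m : ℝ) * p - 1) / ((m : ℝ) - 1) * stepSum ξ f n ω := by
      simp only [stepSum, Finset.mul_sum]
      rw [Finset.sum_comm]
      exact Finset.sum_congr rfl fun k _ => kernel_average hm hf _
    calc _ = (∑ j, f j * stepSum ξ (R j) n ω) * (1 / (n : ℝ) * Z ω) := by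
          rw [Finset.sum_mul]
          exact Finset.sum_congr rfl fun j _ => by ring
      _ = _ := by rw [this]; ring
  simp_rw [hL]
  rw [integral_finsetSum _ fun j _ =>
    (hI (fun i => if i = j then (1 : ℝ) else 0) (n + 1)).const_mul (f j)]
  rw [← integral_const_mul]
  simp_rw [← hT]
  rw [integral_finsetSum _ fun j _ => ((hIs (R j)).const_mul _).const_mul (f j)]
  simp_rw [integral_const_mul (f _), key]

lemma integral_first (h : IsReinforced_s16 μ m p ξ) (f : Fin m → ℝ) :
    ∫ ω, f (ξ 1 ω) ∂μ = (m : ℝ)⁻¹ * ∑ i, f i := by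
  have hL : ∀ ω, f (ξ 1 ω) = ∑ j, f j * ({ω | ξ 1 ω = j}.indicator (fun _ => (1 : ℝ)) ω) := by
    intro ω
    simp [Set.indicator_apply]
  have hms : ∀ j, MeasurableSet {ω | ξ 1 ω = j} := fun j => h.meas 1 (measurableSet_singleton j)
  simp_rw [hL]
  rw [integral_finsetSum _ fun j _ =>
    ((integrable_const (1 : ℝ)).indicator (hms j)).const_mul (f j)]
  rw [Finset.mul_sum]
  refine Finset.sum_congr rfl fun j _ => ?_
  rw [integral_const_mul, integral_indicator_const _ (hms j), Measure.real, h.first_uniform j]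
  simp [mul_comm]

lemma integral_stepSum (h : IsReinforced_s16 μ m p ξ) (hm : 2 ≤ m) {f : Fin m → ℝ}
    (hf : ∑ i, f i = 0) (n : ℕ) : ∫ ω, stepSum ξ f n ω ∂μ = 0 := by
  induction n with
  | zero => simp [stepSum]
  | succ n ih =>
    simp_rw [stepSum_succ]
    rw [integral_add ((h.memLp_stepSum f n).integrable (by norm_num))
      ((h.memLp_comp f _).integrable (by norm_num)), ih, zero_add]
    rcases Nat.eq_zero_or_pos n with rfl | hn
    · rw [zero_add, h.integral_first, hf, mul_zero]
    · have := h.integral_next_mul hm hf hn (Z := fun _ => 1)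
        (@stronglyMeasurable_const _ _ (stepFiltration ξ n) _ _) (memLp_const 1)
      simpa [ih] using this

/-- Every `ξ n` with `1 ≤ n`, not only the first, is uniform. -/
lemma integral_comp (h : IsReinforced_s16 μ m p ξ) (hm : 2 ≤ m) (g : Fin m → ℝ) {n : ℕ}
    (hn : 1 ≤ n) : ∫ ω, g (ξ n ω) ∂μ = (m : ℝ)⁻¹ * ∑ i, g i := by
  have hm0 : (m : ℝ) ≠ 0 := by
    have : m ≠ 0 := by omega
    exact_mod_cast this
  obtain ⟨n, rfl⟩ : ∃ k, n = k + 1 := ⟨n - 1, by omega⟩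
  set c := (m : ℝ)⁻¹ * ∑ i, g i with hc
  have hf : ∑ i, (fun i => g i - c) i = 0 := by
    simp [Finset.sum_sub_distrib, hc, hm0]
  have h0 := h.integral_stepSum hm hf (n + 1)
  simp_rw [stepSum_succ] at h0
  rw [integral_add ((h.memLp_stepSum _ n).integrable (by norm_num))
      ((h.memLp_comp (fun i => g i - c) _).integrable (by norm_num)), h.integral_stepSum hm hf n, zero_add,
      integral_sub ((h.memLp_comp g _).integrable (by norm_num)) (integrable_const c)] at h0
  simp at h0
  linarith

/-- The second-moment recursion `v (n+1) = (1 + 2 a / n) v n + c`, where `c` is the covariance of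
`f` and `g` under the uniform law. -/
lemma integral_stepSum_mul_succ (h : IsReinforced_s16 μ m p ξ) (hm : 2 ≤ m) {f g : Fin m → ℝ}
    (hf : ∑ i, f i = 0) (hg : ∑ i, g i = 0) {n : ℕ} (hn : 1 ≤ n) :
    ∫ ω, stepSum ξ f (n + 1) ω * stepSum ξ g (n + 1) ω ∂μ =
      (1 + 2 * (((m : ℝ) * p - 1) / ((m : ℝ) - 1)) / n)
        * ∫ ω, stepSum ξ f n ω * stepSum ξ g n ω ∂μ + (m : ℝ)⁻¹ * ∑ i, f i * g i := by
  have e : ∀ ω, stepSum ξ f (n + 1) ω * stepSum ξ g (n + 1) ω =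
      (stepSum ξ f n ω * stepSum ξ g n ω + f (ξ (n + 1) ω) * stepSum ξ g n ω)
      + (g (ξ (n + 1) ω) * stepSum ξ f n ω
      + (fun i => f i * g i) (ξ (n + 1) ω)) := by
    intro ω
    rw [stepSum_succ, stepSum_succ]
    ring
  have i1 : Integrable (fun ω => stepSum ξ f n ω * stepSum ξ g n ω) μ :=
    (h.memLp_stepSum f n).integrable_mul (h.memLp_stepSum g n)
  have i2 : Integrable (fun ω => f (ξ (n + 1) ω) * stepSum ξ g n ω) μ :=
    (h.memLp_comp f _).integrable_mul (h.memLp_stepSum g n)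
  have i3 : Integrable (fun ω => g (ξ (n + 1) ω) * stepSum ξ f n ω) μ :=
    (h.memLp_comp g _).integrable_mul (h.memLp_stepSum f n)
  have i4 : Integrable (fun ω => (fun i => f i * g i) (ξ (n + 1) ω)) μ :=
    (h.memLp_comp (fun i => f i * g i) _).integrable (by norm_num)
  rw [integral_congr_ae (ae_of_all _ e), integral_add (by exact i1.add i2) (by exact i3.add i4),
    integral_add i1 i2, integral_add i3 i4,
    h.integral_next_mul hm hf hn (stronglyMeasurable_stepSum g n) (h.memLp_stepSum g n),
    h.integral_next_mul hm hg hn (stronglyMeasurable_stepSum f n) (h.memLp_stepSum f n),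
    h.integral_comp hm (fun i => f i * g i) (by omega)]
  have : ∫ ω, stepSum ξ g n ω * stepSum ξ f n ω ∂μ = ∫ ω, stepSum ξ f n ω * stepSum ξ g n ω ∂μ := by
    simp_rw [mul_comm]
  rw [this]
  ring

end IsReinforced_s16

/-! ### Growth of the second-moment recursion -/

/-- The solution of `v (n+1) = (1 + s / n) v n + c`, `v 1 = c` is
`c / (s - 1) * (s (s + 1) ⋯ (s + n - 1) / (n - 1)! - n)`, so Euler's limit for the Gamma function
gives its growth rate. -/
lemma tendsto_of_recursion {s c : ℝ} (hs : 1 < s) {v : ℕ → ℝ} (h1 : v 1 = c)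
    (hv : ∀ n, 1 ≤ n → v (n + 1) = (1 + s / n) * v n + c) :
    Tendsto (fun n : ℕ => ((n : ℝ) ^ s)⁻¹ * v n) atTop
      (𝓝 (1 / ((s - 1) * Real.Gamma s) * c)) := by
  have hs1 : s - 1 ≠ 0 := by linarith
  have closed : ∀ n : ℕ, v (n + 1) =
      c / (s - 1) * ((∏ j ∈ Finset.range (n + 1), (s + j)) / (n.factorial : ℝ) - (n + 1)) := by
    intro n
    induction n with
    | zero => simp [h1]; field_simp
    | succ n ih =>
      rw [hv (n + 1) (by omega), ih, Finset.prod_range_succ _ (n + 1), Nat.factorial_succ]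
      have : (n.factorial : ℝ) ≠ 0 := by positivity
      push_cast
      field_simp
      ring
  have hG : Tendsto (fun n : ℕ => (Real.GammaSeq s n)⁻¹) atTop (𝓝 (Real.Gamma s)⁻¹) :=
    (Real.GammaSeq_tendsto_Gamma s).inv₀ (Real.Gamma_pos_of_pos (by linarith)).ne'
  have hr : Tendsto (fun n : ℕ => (n : ℝ) / (n + s)) atTop (𝓝 1) :=
    tendsto_natCast_div_add_atTop s
  have hq : Tendsto (fun n : ℕ => (n : ℝ) ^ (-(s - 1))) atTop (𝓝 0) :=
    (tendsto_rpow_neg_atTop (by linarith)).comp tendsto_natCast_atTop_atTop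
  have := ((hG.mul hr).sub hq).const_mul (c / (s - 1))
  refine (this.congr' ?_).trans_eq ?_
  · filter_upwards [eventually_ge_atTop 1] with n hn
    obtain ⟨k, rfl⟩ : ∃ k, n = k + 1 := ⟨n - 1, by omega⟩
    rw [closed k, Real.GammaSeq, Finset.prod_range_succ _ (k + 1), Nat.factorial_succ]
    have hk : (0 : ℝ) < ((k + 1 : ℕ) : ℝ) := by positivity
    have e : ((k + 1 : ℕ) : ℝ) ^ (-(s - 1)) = (((k + 1 : ℕ) : ℝ) ^ s)⁻¹ * ((k + 1 : ℕ) : ℝ) := by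
      rw [neg_sub, sub_eq_add_neg, Real.rpow_add hk, Real.rpow_one, Real.rpow_neg hk.le, mul_comm]
    rw [e]
    have hp : (((k + 1 : ℕ) : ℝ) ^ s) ≠ 0 := (Real.rpow_pos_of_pos hk s).ne'
    have hf : (k.factorial : ℝ) ≠ 0 := by positivity
    have hpr : (∏ j ∈ Finset.range (k + 1), (s + j)) ≠ 0 :=
      (Finset.prod_pos fun j _ => by positivity).ne'
    have hsk : s + ((k + 1 : ℕ) : ℝ) ≠ 0 := by positivity
    have hsk' : ((k + 1 : ℕ) : ℝ) + s ≠ 0 := by positivity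
    generalize (((k + 1 : ℕ) : ℝ) ^ s) = P at *
    generalize (∏ j ∈ Finset.range (k + 1), (s + j)) = Q at *
    push_cast at *
    field_simp
    ring
  · congr 1
    have := (Real.Gamma_pos_of_pos (show 0 < s by linarith)).ne'
    field_simp
    ring

/-! ### Convergence in `L²` -/

/-- Continuity of the `L²` inner product under `L²` convergence of both factors. -/
lemma tendsto_integral_mul {Ω : Type*} [MeasurableSpace Ω] {μ : Measure Ω}
    {A B : ℕ → Ω → ℝ} {A' B' : Ω → ℝ} (hA : ∀ n, MemLp (A n) 2 μ) (hA' : MemLp A' 2 μ)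
    (hB : ∀ n, MemLp (B n) 2 μ) (hB' : MemLp B' 2 μ)
    (hAt : Tendsto (fun n => eLpNorm (A n - A') 2 μ) atTop (𝓝 0))
    (hBt : Tendsto (fun n => eLpNorm (B n - B') 2 μ) atTop (𝓝 0)) :
    Tendsto (fun n => ∫ ω, A n ω * B n ω ∂μ) atTop (𝓝 (∫ ω, A' ω * B' ω ∂μ)) := by
  have hin : ∀ {f g : Ω → ℝ} (hf : MemLp f 2 μ) (hg : MemLp g 2 μ),
      inner ℝ (hf.toLp f) (hg.toLp g) = ∫ ω, f ω * g ω ∂μ := by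
    intro f g hf hg
    rw [L2.inner_def]
    refine integral_congr_ae ?_
    filter_upwards [hf.coeFn_toLp, hg.coeFn_toLp] with ω h1 h2
    rw [h1, h2]
    simp [mul_comm]
  have h := ((Lp.tendsto_Lp_iff_tendsto_eLpNorm'' A hA A' hA').2 hAt).inner (𝕜 := ℝ)
    ((Lp.tendsto_Lp_iff_tendsto_eLpNorm'' B hB B' hB').2 hBt)
  simpa only [hin] using h

lemma eLpNorm_two_eq {Ω E : Type*} [MeasurableSpace Ω] [NormedAddCommGroup E] {μ : Measure Ω}
    {f : Ω → E} (hf : MemLp f 2 μ) :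
    eLpNorm f 2 μ = ENNReal.ofReal (Real.sqrt (∫ ω, ‖f ω‖ ^ 2 ∂μ)) := by
  rw [hf.eLpNorm_eq_integral_rpow_norm (by norm_num) (by norm_num), Real.sqrt_eq_rpow]
  norm_num

/-! ### Limits of the second moments -/

namespace IsReinforced_s16

variable {Ω : Type*} [MeasurableSpace Ω] {μ : Measure Ω} [IsProbabilityMeasure μ]
  {m : ℕ} {p : ℝ} {ξ : ℕ → Ω → Fin m}

lemma tendsto_second_moment (h : IsReinforced_s16 μ m p ξ) (hm : 2 ≤ m) {f g : Fin m → ℝ}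
    (hf : ∑ i, f i = 0) (hg : ∑ i, g i = 0) {a : ℝ}
    (ha : a = ((m : ℝ) * p - 1) / ((m : ℝ) - 1)) (ha2 : 1 < 2 * a) :
    Tendsto (fun n : ℕ => ((n : ℝ) ^ (2 * a))⁻¹ * ∫ ω, stepSum ξ f n ω * stepSum ξ g n ω ∂μ) atTop
      (𝓝 (1 / ((2 * a - 1) * Real.Gamma (2 * a)) * ((m : ℝ)⁻¹ * ∑ i, f i * g i))) := by
  refine tendsto_of_recursion ha2 (v := fun n => ∫ ω, stepSum ξ f n ω * stepSum ξ g n ω ∂μ) ?_ ?_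
  · simpa [stepSum] using h.integral_first (fun i => f i * g i)
  · intro n hn
    rw [ha]
    exact h.integral_stepSum_mul_succ hm hf hg hn

end IsReinforced_s16

/-- Sums driven by `ξ` and by `η` are uncorrelated, by independence and centering. -/
lemma integral_cross_eq_zero {Ω : Type*} [MeasurableSpace Ω] {μ : Measure Ω}
    [IsProbabilityMeasure μ] {m m' : ℕ} {p : ℝ} {ξ : ℕ → Ω → Fin m} {η : ℕ → Ω → Fin m'}
    (hξ : IsReinforced_s16 μ m p ξ) (hη : IsReinforced_s16 μ m' p η) (hm : 2 ≤ m)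
    (hind : IndepFun (fun ω => fun k => ξ k ω) (fun ω => fun k => η k ω) μ)
    {f : Fin m → ℝ} {g : Fin m' → ℝ} (hf : ∑ i, f i = 0) (n : ℕ) :
    ∫ ω, stepSum ξ f n ω * stepSum η g n ω ∂μ = 0 := by
  have hF : ∀ {l : ℕ} (q : Fin l → ℝ),
      Measurable (fun x : ℕ → Fin l => ∑ k ∈ Finset.Icc 1 n, q (x k)) := fun q =>
    Finset.measurable_fun_sum _ fun k _ => (measurable_of_finite q).comp (measurable_pi_apply k)
  have := hind.integral_fun_comp_mul_comp (measurable_pi_lambda _ hξ.meas).aemeasurable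
    (measurable_pi_lambda _ hη.meas).aemeasurable (hF f).aestronglyMeasurable
    (hF g).aestronglyMeasurable
  refine this.trans ?_
  rw [show ∫ ω, ∑ k ∈ Finset.Icc 1 n, f (ξ k ω) ∂μ = 0 from hξ.integral_stepSum hm hf n, zero_mul]

/-- **Moments of the superdiffusive limit for the Type-II ERW**: if `m = m'`,
`ū = w̄ = 0`, the first steps are uniform, `p > p_c^m` and `S_{2n}/n^a → L` a.s. and in
`L²`, then `𝔼[L] = 0` and `𝔼[L Lᵀ] = (1/((2a-1) Γ(2a))) (Σ(U) + Σ(W))`. -/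
theorem typeII_ERW_superdiffusive_limit_moments
    {Ω : Type*} [MeasurableSpace Ω] (μ : Measure Ω) [IsProbabilityMeasure μ]
    (d m m' : ℕ) (hm : 2 ≤ m) (hm' : 2 ≤ m') (hmm' : m = m')
    (u : Fin m → Fin d → ℝ) (hu : Function.Injective u)
    (w : Fin m' → Fin d → ℝ) (hw : Function.Injective w)
    (p : ℝ) (hp0 : 0 < p) (hp1 : p < 1) (hpc : ((m : ℝ) + 1) / (2 * m) < p)
    (ξ : ℕ → Ω → Fin m) (η : ℕ → Ω → Fin m')
    (hERW : IsTypeIIERWUniform μ m m' p ξ η)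
    (ub wb : Fin d → ℝ) (hub : ub = (m : ℝ)⁻¹ • ∑ i, u i) (hub0 : ub = 0)
    (hwb : wb = (m' : ℝ)⁻¹ • ∑ j, w j) (hwb0 : wb = 0)
    (SigmaU SigmaW : Matrix (Fin d) (Fin d) ℝ)
    (hSigmaU : SigmaU = (m : ℝ)⁻¹ • ∑ i, Matrix.vecMulVec (u i - ub) (u i - ub))
    (hSigmaW : SigmaW = (m' : ℝ)⁻¹ • ∑ j, Matrix.vecMulVec (w j - wb) (w j - wb))
    (a : ℝ) (ha : a = ((m : ℝ) * p - 1) / ((m : ℝ) - 1))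
    (L : Ω → Fin d → ℝ) (hL : Measurable L)
    (hae : ∀ᵐ ω ∂μ, Tendsto (fun n : ℕ => ((n : ℝ) ^ a)⁻¹ •
        ∑ k ∈ Finset.Icc 1 n, (u (ξ k ω) + w (η k ω)))
      atTop (𝓝 (L ω)))
    (hL2 : Tendsto (fun n : ℕ => ∫ ω, ‖((n : ℝ) ^ a)⁻¹ •
        ∑ k ∈ Finset.Icc 1 n, (u (ξ k ω) + w (η k ω)) - L ω‖ ^ 2 ∂μ)
      atTop (𝓝 0)) :
    (∫ ω, L ω ∂μ) = 0 ∧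
      ∀ r s : Fin d, ∫ ω, L ω r * L ω s ∂μ =
        (1 / ((2 * a - 1) * Real.Gamma (2 * a))) * (SigmaU + SigmaW) r s := by
  subst hmm'
  have hξ : IsReinforced_s16 μ m p ξ := ⟨hERW.measurable_fst, hERW.first_fst_uniform, hERW.cond_fst⟩
  have hη : IsReinforced_s16 μ m p η := ⟨hERW.measurable_snd, hERW.first_snd_uniform, hERW.cond_snd⟩
  have hmR : (2 : ℝ) ≤ m := by exact_mod_cast hm
  have ha2 : 1 < 2 * a := by
    rw [div_lt_iff₀ (by linarith)] at hpc
    rw [ha, ← mul_div_assoc, lt_div_iff₀ (by linarith)]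
    linarith
  have centered : ∀ {x : Fin m → Fin d → ℝ} {b : Fin d → ℝ}, b = (m : ℝ)⁻¹ • ∑ i, x i → b = 0 →
      ∀ r, ∑ i, x i r = 0 := by
    intro x b hb hb0 r
    rw [hb0] at hb
    have := congrFun hb r
    have hm0 : (m : ℝ) ≠ 0 := by linarith
    simpa [hm0, eq_comm] using this
  have hu0 := centered hub hub0
  have hw0 := centered hwb hwb0
  set f : Fin d → Fin m → ℝ := fun r i => u i r with hf
  set g : Fin d → Fin m → ℝ := fun r i => w i r with hg
  set X : ℕ → Ω → Fin d → ℝ := fun n ω => ((n : ℝ) ^ a)⁻¹ •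
        ∑ k ∈ Finset.Icc 1 n, (u (ξ k ω) + w (η k ω)) with hXdef
  have hX : ∀ n ω r, X n ω r
      = ((n : ℝ) ^ a)⁻¹ * (stepSum ξ (f r) n ω + stepSum η (g r) n ω) := by
    intro n ω r
    simp [hXdef, stepSum, Finset.sum_add_distrib, hf, hg, mul_add]
  have hXmem : ∀ n r, MemLp (fun ω => X n ω r) 2 μ := by
    intro n r
    simp_rw [hX]
    exact ((hξ.memLp_stepSum (f r) n).add (hη.memLp_stepSum (g r) n)).const_mul _
  have hXmean : ∀ n r, ∫ ω, X n ω r ∂μ = 0 := by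
    intro n r
    simp_rw [hX]
    rw [integral_const_mul, integral_add ((hξ.memLp_stepSum _ n).integrable (by norm_num))
      ((hη.memLp_stepSum _ n).integrable (by norm_num)), hξ.integral_stepSum hm (hu0 r),
      hη.integral_stepSum hm (hw0 r)]
    simp
  have hXX : ∀ n r s, ∫ ω, X n ω r * X n ω s ∂μ = ((n : ℝ) ^ (2 * a))⁻¹
      * (∫ ω, stepSum ξ (f r) n ω * stepSum ξ (f s) n ω ∂μ)
      + ((n : ℝ) ^ (2 * a))⁻¹ * ∫ ω, stepSum η (g r) n ω * stepSum η (g s) n ω ∂μ := by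
    intro n r s
    have hpow : ((n : ℝ) ^ (2 * a)) = (n : ℝ) ^ a * (n : ℝ) ^ a := by
      rw [mul_comm, Real.rpow_mul n.cast_nonneg, Real.rpow_two, sq]
    have e : ∀ ω, X n ω r * X n ω s = ((n : ℝ) ^ (2 * a))⁻¹ *
        ((stepSum ξ (f r) n ω * stepSum ξ (f s) n ω + stepSum η (g r) n ω * stepSum η (g s) n ω)
        + (stepSum ξ (f r) n ω * stepSum η (g s) n ω
          + stepSum ξ (f s) n ω * stepSum η (g r) n ω)) := by
      intro ω
      rw [hX, hX, hpow, mul_inv]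
      ring
    have i1 : Integrable (fun ω => stepSum ξ (f r) n ω * stepSum ξ (f s) n ω) μ :=
      (hξ.memLp_stepSum _ n).integrable_mul (hξ.memLp_stepSum _ n)
    have i2 : Integrable (fun ω => stepSum η (g r) n ω * stepSum η (g s) n ω) μ :=
      (hη.memLp_stepSum _ n).integrable_mul (hη.memLp_stepSum _ n)
    have i3 : ∀ r s, Integrable (fun ω => stepSum ξ (f r) n ω * stepSum η (g s) n ω) μ :=
      fun r s => (hξ.memLp_stepSum _ n).integrable_mul (hη.memLp_stepSum _ n)
    rw [integral_congr_ae (ae_of_all _ e), integral_const_mul,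
      integral_add (by exact i1.add i2) (by exact (i3 r s).add (i3 s r)), integral_add i1 i2,
      integral_add (i3 r s) (i3 s r),
      integral_cross_eq_zero hξ hη hm hERW.indep (hu0 r),
      integral_cross_eq_zero hξ hη hm hERW.indep (hu0 s)]
    ring
  have hlim : ∀ r s, Tendsto (fun n => ∫ ω, X n ω r * X n ω s ∂μ) atTop
      (𝓝 (1 / ((2 * a - 1) * Real.Gamma (2 * a)) * (SigmaU + SigmaW) r s)) := by
    intro r s
    simp_rw [hXX]
    refine ((hξ.tendsto_second_moment hm (hu0 r) (hu0 s) ha ha2).add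
      (hη.tendsto_second_moment hm (hw0 r) (hw0 s) ha ha2)).trans_eq ?_
    rw [hSigmaU, hSigmaW, hub0, hwb0]
    simp [Matrix.sum_apply, Matrix.vecMulVec_apply, mul_add]
  -- Square integrability of `L` is not implied by `hL2`, whose Bochner integrals are `0` when the
  -- integrand is not integrable; it follows from almost sure convergence by Fatou's lemma.
  have hLmem : ∀ r, MemLp (fun ω => L ω r) 2 μ := by
    intro r
    refine ⟨((measurable_pi_apply r).comp hL).aestronglyMeasurable, ?_⟩
    have hnorm : Tendsto (fun n => eLpNorm (fun ω => X n ω r) 2 μ) atTop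
        (𝓝 (ENNReal.ofReal (Real.sqrt
          (1 / ((2 * a - 1) * Real.Gamma (2 * a)) * (SigmaU + SigmaW) r r)))) := by
      refine Tendsto.congr (fun n => ?_) (ENNReal.tendsto_ofReal (hlim r r).sqrt)
      rw [eLpNorm_two_eq (hXmem n r)]
      simp [sq]
    refine lt_of_le_of_lt (Lp.eLpNorm_lim_le_liminf_eLpNorm
      (fun n => (hXmem n r).aestronglyMeasurable) _ ?_) (hnorm.liminf_eq.trans_lt ENNReal.ofReal_lt_top)
    filter_upwards [hae] with ω hω
    exact (tendsto_pi_nhds.1 hω) r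
  have hdiff : ∀ n, MemLp (X n - L) 2 μ := fun n =>
    (MemLp.of_eval (hXmem n)).sub (MemLp.of_eval hLmem)
  have hconv : Tendsto (fun n => eLpNorm (X n - L) 2 μ) atTop (𝓝 0) := by
    have := ENNReal.tendsto_ofReal hL2.sqrt
    simp only [Real.sqrt_zero, ENNReal.ofReal_zero] at this
    refine this.congr fun n => ?_
    rw [eLpNorm_two_eq (hdiff n)]
    rfl
  have hconv' : ∀ r, Tendsto (fun n => eLpNorm ((fun ω => X n ω r) - fun ω => L ω r) 2 μ)
      atTop (𝓝 0) := by
    intro r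
    refine tendsto_of_tendsto_of_tendsto_of_le_of_le tendsto_const_nhds hconv
      (fun _ => zero_le) fun n => ?_
    exact eLpNorm_mono fun ω => norm_le_pi_norm ((X n - L) ω) r
  refine ⟨?_, fun r s => ?_⟩
  · ext r
    rw [eval_integral fun i => (hLmem i).integrable (by norm_num)]
    have h1 := tendsto_integral_mul (fun n => hXmem n r) (hLmem r)
      (B := fun _ _ => 1) (B' := fun _ => 1) (fun _ => memLp_const 1) (memLp_const 1)
      (hconv' r) (by simp)
    simp only [mul_one, hXmean] at h1
    exact tendsto_nhds_unique h1 tendsto_const_nhds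
  · exact tendsto_nhds_unique (tendsto_integral_mul (fun n => hXmem n r) (hLmem r)
      (fun n => hXmem n s) (hLmem s) (hconv' r) (hconv' s)) (hlim r s)
end
end
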